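/- Suppose X ~ N_n(θ₀, I_n) and consider the one-group shrinkage prior with a = 1/2 applied independently to each coordinate. Let (p_n) be a sequence with p_n → ∞ and p_n = o(n), and set τ_n = p_n/n. Then for every sequence M_n → ∞, sup_{θ₀ ∈ l₀[p_n]} E_{θ₀} Π( θ ∈ ℝⁿ : ||θ − T_{τ_n}(X)||² > M_n p_n √(log(n/p_n)) | X ) → 0 as n → ∞, where T_{τ_n}(X) is the coordinatewise posterior mean. -/

import Mathlib

open MeasureTheory Filter Set

noncomputable section

namespace OneGroup

/-- A one-group (global-local) shrinkage prior: the local variance `λ²` has density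
`π(λ²) = K (λ²)^{-a-1} L(λ²)` on `(0,∞)`, where `L` is a positive, measurable,
non-constant slowly varying function, bounded above by `M`, and bounded below by
`c₀` on `[t₀, ∞)`. -/
structure Prior where
  K : ℝ
  a : ℝ
  L : ℝ → ℝ
  M : ℝ
  c₀ : ℝ
  t₀ : ℝ
  K_pos : 0 < K
  a_pos : 0 < a
  L_pos : ∀ t : ℝ, 0 < t → 0 < L t
  L_meas : Measurable L
  L_slow : ∀ c : ℝ, 0 < c → Tendsto (fun t => L (c * t) / L t) atTop (nhds 1)
  L_nonconst : ∃ s : ℝ, 0 < s ∧ ∃ t : ℝ, 0 < t ∧ L s ≠ L t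
  M_pos : 0 < M
  L_le : ∀ t : ℝ, 0 < t → L t ≤ M
  c₀_pos : 0 < c₀
  t₀_pos : 0 < t₀
  L_ge : ∀ t : ℝ, t₀ ≤ t → c₀ ≤ L t

/-- The (unnormalized) posterior weight, as a function of `t = λ²`, entering all
posterior expectations of functions of the shrinkage coefficient `κ = 1/(1+tτ²)`. -/
def wt (P : Prior) (x τ t : ℝ) : ℝ :=
  (1 + t * τ ^ 2) ^ (-(1:ℝ)/2) * t ^ (-P.a - 1) * P.L t *
    Real.exp (-x ^ 2 / (2 * (1 + t * τ ^ 2)))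

/-- Posterior expectation `E(g(κ) | x, τ)` of a function `g` of the shrinkage
coefficient `κ = 1/(1+λ²τ²)`. -/
def postExp (P : Prior) (g : ℝ → ℝ) (x τ : ℝ) : ℝ :=
  (∫ t in Ioi (0:ℝ), g (1 / (1 + t * τ ^ 2)) * wt P x τ t) /
    (∫ t in Ioi (0:ℝ), wt P x τ t)

/-- The posterior mean `T_τ(x) = x (1 - E(κ | x, τ))`. -/
def T (P : Prior) (τ x : ℝ) : ℝ := x * (1 - postExp P (fun κ => κ) x τ)

/-- The marginal prior density `p_τ(θ)` of `θ`. -/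
def pdens (P : Prior) (τ θ : ℝ) : ℝ :=
  ∫ u in Ioi (0:ℝ),
    (Real.sqrt (2 * Real.pi * u * τ ^ 2))⁻¹ * Real.exp (-θ ^ 2 / (2 * u * τ ^ 2)) *
      (P.K * u ^ (-P.a - 1) * P.L u)

/-- The unnormalized posterior density of `θ` given an observation `x ~ N(θ,1)`. -/
def postw (P : Prior) (τ x θ : ℝ) : ℝ := Real.exp (-(x - θ) ^ 2 / 2) * pdens P τ θ

/-- The `k`-th posterior moment of `θ` given `x`. -/
def postMoment (P : Prior) (τ x : ℝ) (k : ℕ) : ℝ :=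
  (∫ θ : ℝ, θ ^ k * postw P τ x θ) / (∫ θ : ℝ, postw P τ x θ)

/-- The posterior variance `Var(θ | x)`. -/
def postVar (P : Prior) (τ x : ℝ) : ℝ := postMoment P τ x 2 - (postMoment P τ x 1) ^ 2

/-- The standard normal density. -/
def gauss (z : ℝ) : ℝ := (Real.sqrt (2 * Real.pi))⁻¹ * Real.exp (-z ^ 2 / 2)

/-- Expectation of `f(X)` for `X ~ N(θ, 1)`. -/
def E1 (θ : ℝ) (f : ℝ → ℝ) : ℝ := ∫ x : ℝ, f x * gauss (x - θ)

/-- Expectation of `f(X)` for `X ~ N_n(θ, I_n)`. -/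
def EN (n : ℕ) (θ : Fin n → ℝ) (f : (Fin n → ℝ) → ℝ) : ℝ :=
  ∫ x : Fin n → ℝ, f x * ∏ i, gauss (x i - θ i)

/-- The posterior probability `Π(A | x)` of a set `A ⊆ ℝⁿ` given data `x`,
for the coordinatewise-independent posterior. -/
def postProb (P : Prior) (τ : ℝ) {n : ℕ} (x : Fin n → ℝ) (A : Set (Fin n → ℝ)) : ℝ :=
  (∫ θ in A, ∏ i, postw P τ (x i) (θ i)) /
    (∫ θ : Fin n → ℝ, ∏ i, postw P τ (x i) (θ i))

/-- The set `l₀[p]` of nearly black vectors in `ℝⁿ`. -/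
def nearlyBlack (n p : ℕ) : Set (Fin n → ℝ) :=
  {θ | (Finset.univ.filter fun i => θ i ≠ 0).card ≤ p}

end OneGroup

open OneGroup

namespace OneGroup

lemma gauss_moment (m c : ℝ) (v : NNReal) (hv : v ≠ 0) :
    Integrable (fun θ => (θ - c) ^ 2 * ProbabilityTheory.gaussianPDFReal m v θ) ∧
      ∫ θ, (θ - c) ^ 2 * ProbabilityTheory.gaussianPDFReal m v θ = v + (m - c) ^ 2 := by
  have h2 : MemLp (fun θ : ℝ => θ - c) 2 (ProbabilityTheory.gaussianReal m v) :=
    (ProbabilityTheory.memLp_id_gaussianReal' 2 (by simp)).sub (memLp_const c)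
  have hi : Integrable (fun θ : ℝ => (θ - c) ^ 2) (ProbabilityTheory.gaussianReal m v) :=
    h2.integrable_sq
  have hid : Integrable (fun θ : ℝ => θ) (ProbabilityTheory.gaussianReal m v) :=
    (ProbabilityTheory.memLp_id_gaussianReal' 1 (by simp)).integrable le_rfl
  constructor
  · rw [ProbabilityTheory.gaussianReal_of_var_ne_zero _ hv] at hi
    have := (integrable_withDensity_iff (ProbabilityTheory.measurable_gaussianPDF m v)
      (by simp [ProbabilityTheory.gaussianPDF])).1 hi
    simpa [ProbabilityTheory.gaussianPDF,
      ENNReal.toReal_ofReal (ProbabilityTheory.gaussianPDFReal_nonneg _ _ _)] using this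
  · have e1 : ∫ θ, (θ - c) ^ 2 * ProbabilityTheory.gaussianPDFReal m v θ
        = ∫ θ, (θ - c) ^ 2 ∂(ProbabilityTheory.gaussianReal m v) := by
      rw [ProbabilityTheory.integral_gaussianReal_eq_integral_smul hv]
      simp [mul_comm]
    rw [e1]
    have hv2 := ProbabilityTheory.variance_eq_sub h2
    have hvar : ProbabilityTheory.variance (fun θ : ℝ => θ - c)
        (ProbabilityTheory.gaussianReal m v) = v := by
      rw [ProbabilityTheory.variance_sub_const (X := fun θ : ℝ => θ) aestronglyMeasurable_id]
      exact ProbabilityTheory.variance_fun_id_gaussianReal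
    rw [hvar] at hv2
    have e2 : ∫ θ, (θ - c) ∂(ProbabilityTheory.gaussianReal m v) = m - c := by
      rw [integral_sub hid (integrable_const c)]
      simp [ProbabilityTheory.integral_id_gaussianReal]
    rw [e2] at hv2
    have : ∫ θ, ((fun θ : ℝ => θ - c) ^ 2) θ ∂(ProbabilityTheory.gaussianReal m v)
      = ∫ θ, (θ - c) ^ 2 ∂(ProbabilityTheory.gaussianReal m v) := rfl
    rw [this] at hv2
    linarith

/-- completing the square -/
lemma gsec_eq (x s θ : ℝ) (hs : 0 < s) :
    Real.exp (-(x - θ) ^ 2 / 2) * ((Real.sqrt (2 * Real.pi * s))⁻¹ * Real.exp (-θ ^ 2 / (2 * s)))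
      = ((1 + s) ^ (-(1:ℝ)/2) * Real.exp (-x ^ 2 / (2 * (1 + s)))) *
        ProbabilityTheory.gaussianPDFReal (x * (s / (1 + s)))
          (Real.toNNReal (s / (1 + s))) θ := by
  have h1 : 0 < 1 + s := by linarith
  have hv : ((Real.toNNReal (s / (1 + s)) : NNReal) : ℝ) = s / (1 + s) :=
    Real.coe_toNNReal _ (by positivity)
  rw [ProbabilityTheory.gaussianPDFReal, hv]
  have e1 : (1 + s) ^ (-(1:ℝ)/2) = (Real.sqrt (1 + s))⁻¹ := by
    rw [Real.sqrt_eq_rpow, ← Real.rpow_neg h1.le]; norm_num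
  have e2 : Real.sqrt (2 * Real.pi * (s / (1 + s)))
      = Real.sqrt (2 * Real.pi * s) / Real.sqrt (1 + s) := by
    rw [← Real.sqrt_div (by positivity)]; congr 1; ring
  rw [e1, e2]
  have h3 : Real.sqrt (1 + s) ≠ 0 := by positivity
  have h4 : Real.sqrt (2 * Real.pi * s) ≠ 0 := by positivity
  have e3 : Real.exp (-(x - θ) ^ 2 / 2) * Real.exp (-θ ^ 2 / (2 * s))
     = Real.exp (-x ^ 2 / (2 * (1 + s))) *
       Real.exp (-(θ - x * (s / (1 + s))) ^ 2 / (2 * (s / (1 + s)))) := by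
    rw [← Real.exp_add, ← Real.exp_add]; congr 1
    field_simp
    ring
  calc _ = (Real.sqrt (2 * Real.pi * s))⁻¹ *
        (Real.exp (-(x - θ) ^ 2 / 2) * Real.exp (-θ ^ 2 / (2 * s))) := by ring
    _ = _ := by rw [e3]; field_simp

/-- joint density in `(θ, u)` -/
def joint (P : Prior) (τ x θ u : ℝ) : ℝ :=
  Real.exp (-(x - θ) ^ 2 / 2) *
    ((Real.sqrt (2 * Real.pi * u * τ ^ 2))⁻¹ * Real.exp (-θ ^ 2 / (2 * u * τ ^ 2)) *
      (P.K * u ^ (-P.a - 1) * P.L u))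

lemma joint_meas (P : Prior) (τ x : ℝ) : Measurable (fun z : ℝ × ℝ => joint P τ x z.1 z.2) := by
  have := P.L_meas
  unfold joint
  fun_prop

lemma joint_eq (P : Prior) (τ x θ u : ℝ) (hτ : 0 < τ) (hu : 0 < u) :
    joint P τ x θ u = P.K * wt P x τ u * ProbabilityTheory.gaussianPDFReal
      (x * (u * τ ^ 2 / (1 + u * τ ^ 2))) (Real.toNNReal (u * τ ^ 2 / (1 + u * τ ^ 2))) θ := by
  have := gsec_eq x (u * τ ^ 2) θ (by positivity)
  unfold joint wt
  rw [show 2 * Real.pi * u * τ ^ 2 = 2 * Real.pi * (u * τ ^ 2) by ring,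
    show 2 * u * τ ^ 2 = 2 * (u * τ ^ 2) by ring, ← mul_assoc, this]
  ring

lemma joint_nonneg (P : Prior) (τ x θ u : ℝ) (hu : 0 < u) : 0 ≤ joint P τ x θ u := by
  have := P.K_pos
  have := P.L_pos u hu
  unfold joint
  positivity

lemma wt_pos (P : Prior) (x τ t : ℝ) (ht : 0 < t) : 0 < wt P x τ t := by
  have := P.L_pos t ht
  unfold wt
  positivity

lemma wt_meas (P : Prior) (x τ : ℝ) : Measurable (fun t => wt P x τ t) := by
  have := P.L_meas
  unfold wt
  fun_prop

lemma postw_eq (P : Prior) (τ x θ : ℝ) : postw P τ x θ = ∫ u in Ioi (0:ℝ), joint P τ x θ u := by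
  unfold postw pdens joint
  rw [integral_const_mul]

/-- moments of joint in θ -/
lemma joint_moment (P : Prior) (τ x c u : ℝ) (hτ : 0 < τ) (hu : 0 < u) :
    Integrable (fun θ => (θ - c) ^ 2 * joint P τ x θ u) ∧
    ∫ θ, (θ - c) ^ 2 * joint P τ x θ u = P.K * (wt P x τ u *
      (u * τ ^ 2 / (1 + u * τ ^ 2) + (x * (u * τ ^ 2 / (1 + u * τ ^ 2)) - c) ^ 2)) := by
  have hq : 0 < u * τ ^ 2 / (1 + u * τ ^ 2) := by positivity
  have h := gauss_moment (x * (u * τ ^ 2 / (1 + u * τ ^ 2))) c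
    (Real.toNNReal (u * τ ^ 2 / (1 + u * τ ^ 2))) (by simpa using hq)
  have e : (fun θ => (θ - c) ^ 2 * joint P τ x θ u) = fun θ => (P.K * wt P x τ u) *
      ((θ - c) ^ 2 * ProbabilityTheory.gaussianPDFReal
      (x * (u * τ ^ 2 / (1 + u * τ ^ 2))) (Real.toNNReal (u * τ ^ 2 / (1 + u * τ ^ 2))) θ) := by
    funext θ
    rw [joint_eq P τ x θ u hτ hu]; ring
  rw [e]
  refine ⟨h.1.const_mul _, ?_⟩
  rw [integral_const_mul, h.2, Real.coe_toNNReal _ hq.le]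
  ring

lemma joint_mass (P : Prior) (τ x u : ℝ) (hτ : 0 < τ) (hu : 0 < u) :
    Integrable (fun θ => joint P τ x θ u) ∧
    ∫ θ, joint P τ x θ u = P.K * wt P x τ u := by
  have hq : 0 < u * τ ^ 2 / (1 + u * τ ^ 2) := by positivity
  have e : (fun θ => joint P τ x θ u) = fun θ => (P.K * wt P x τ u) *
      (ProbabilityTheory.gaussianPDFReal
      (x * (u * τ ^ 2 / (1 + u * τ ^ 2))) (Real.toNNReal (u * τ ^ 2 / (1 + u * τ ^ 2))) θ) := by
    funext θ
    rw [joint_eq P τ x θ u hτ hu]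
  rw [e]
  refine ⟨(ProbabilityTheory.integrable_gaussianPDFReal _ _).const_mul _, ?_⟩
  rw [integral_const_mul, ProbabilityTheory.integral_gaussianPDFReal_eq_one _ (by simpa using hq)]
  ring

/-- Generic Tonelli step. -/
lemma tonelli (P : Prior) (τ x : ℝ) (g : ℝ → ℝ) (hg : Measurable g) (hg0 : ∀ θ, 0 ≤ g θ)
    (h : ℝ → ℝ) (hh : IntegrableOn h (Ioi 0))
    (H : ∀ u, 0 < u → Integrable (fun θ => g θ * joint P τ x θ u) ∧
      ∫ θ, g θ * joint P τ x θ u = h u) :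
    Integrable (fun θ => g θ * postw P τ x θ) ∧
      ∫ θ, g θ * postw P τ x θ = ∫ u in Ioi (0:ℝ), h u := by
  have hm : AEStronglyMeasurable (fun z : ℝ × ℝ => g z.1 * joint P τ x z.1 z.2)
      ((volume : Measure ℝ).prod (volume.restrict (Ioi (0:ℝ)))) :=
    ((hg.comp measurable_fst).mul (joint_meas P τ x)).aestronglyMeasurable
  have hjint : Integrable (fun z : ℝ × ℝ => g z.1 * joint P τ x z.1 z.2)
      ((volume : Measure ℝ).prod (volume.restrict (Ioi (0:ℝ)))) := by
    rw [integrable_prod_iff' hm]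
    constructor
    · filter_upwards [ae_restrict_mem measurableSet_Ioi] with u hu
      exact (H u hu).1
    · refine hh.congr ?_
      filter_upwards [ae_restrict_mem measurableSet_Ioi] with u hu
      rw [← (H u hu).2]
      congr 1; funext θ
      rw [Real.norm_of_nonneg (mul_nonneg (hg0 θ) (joint_nonneg P τ x θ u hu))]
  have e : (fun θ => g θ * postw P τ x θ)
      = fun θ => ∫ u in Ioi (0:ℝ), g θ * joint P τ x θ u := by
    funext θ
    rw [postw_eq, integral_const_mul]
  rw [e]
  refine ⟨hjint.integral_prod_left, ?_⟩
  rw [integral_integral_swap (f := fun θ u => g θ * joint P τ x θ u) hjint]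
  refine setIntegral_congr_fun measurableSet_Ioi ?_
  intro u hu
  exact (H u hu).2

end OneGroup

namespace OneGroup

/-- the (unnormalised) prior density -/
def bpr (P : Prior) (t : ℝ) : ℝ := t ^ (-P.a - 1) * P.L t

lemma bpr_nonneg (P : Prior) (t : ℝ) (ht : 0 < t) : 0 ≤ bpr P t := by
  have := P.L_pos t ht
  unfold bpr; positivity

lemma bpr_meas (P : Prior) : Measurable (bpr P) := by
  have := P.L_meas
  unfold bpr; fun_prop

lemma rpow_half (y : ℝ) (hy : 0 < y) : y ^ (-(1:ℝ)/2) = (Real.sqrt y)⁻¹ := by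
  rw [Real.sqrt_eq_rpow, ← Real.rpow_neg hy.le]; norm_num

lemma rpow_a (P : Prior) (ha : P.a = 1/2) (t : ℝ) (ht : 0 < t) :
    t ^ (-P.a - 1) = (Real.sqrt t)⁻¹ * t⁻¹ := by
  rw [ha, Real.sqrt_eq_rpow, ← Real.rpow_neg ht.le, ← Real.rpow_neg_one t,
    ← Real.rpow_add ht]; norm_num

lemma wt_le (P : Prior) (x τ t : ℝ) (ht : 0 < t) : wt P x τ t ≤ bpr P t := by
  have hb := bpr_nonneg P t ht
  have h1 : 0 < 1 + t * τ ^ 2 := by positivity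
  have e : wt P x τ t = (1 + t * τ ^ 2) ^ (-(1:ℝ)/2) *
      Real.exp (-x ^ 2 / (2 * (1 + t * τ ^ 2))) * bpr P t := by
    unfold wt bpr; ring
  rw [e]
  have h2 : (1 + t * τ ^ 2) ^ (-(1:ℝ)/2) ≤ 1 :=
    Real.rpow_le_one_of_one_le_of_nonpos (by nlinarith [mul_nonneg ht.le (sq_nonneg τ)]) (by norm_num)
  have h3 : Real.exp (-x ^ 2 / (2 * (1 + t * τ ^ 2))) ≤ 1 := by
    rw [Real.exp_le_one_iff, neg_div]
    simp only [Left.neg_nonpos_iff]; positivity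
  calc _ ≤ 1 * 1 * bpr P t := by gcongr
    _ = _ := by ring

lemma wt_int (P : Prior) (hb : IntegrableOn (bpr P) (Ioi 0)) (x τ : ℝ) :
    IntegrableOn (fun t => wt P x τ t) (Ioi 0) := by
  refine hb.mono' (wt_meas P x τ).aestronglyMeasurable ?_
  filter_upwards [ae_restrict_mem measurableSet_Ioi] with t ht
  rw [Real.norm_of_nonneg (wt_pos P x τ t ht).le]
  exact wt_le P x τ t ht

lemma bdd_wt_int (P : Prior) (hb : IntegrableOn (bpr P) (Ioi 0)) (x τ : ℝ) (φ : ℝ → ℝ)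
    (hφ : Measurable φ) (C : ℝ) (hC : ∀ t, 0 < t → |φ t| ≤ C) :
    IntegrableOn (fun t => φ t * wt P x τ t) (Ioi 0) := by
  refine ((wt_int P hb x τ).const_mul C).mono' (hφ.mul (wt_meas P x τ)).aestronglyMeasurable ?_
  filter_upwards [ae_restrict_mem measurableSet_Ioi] with t ht
  rw [norm_mul, Real.norm_of_nonneg (wt_pos P x τ t ht).le]
  exact mul_le_mul_of_nonneg_right (hC t ht) (wt_pos P x τ t ht).le

lemma bpr_int_of_wt (P : Prior) (x τ : ℝ) (h : IntegrableOn (fun t => wt P x τ t) (Ioi 0)) :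
    IntegrableOn (bpr P) (Ioi 0) := by
  rw [← Ioc_union_Ioi_eq_Ioi (zero_le_one' ℝ)]
  refine IntegrableOn.union ?_ ?_
  · have h' : IntegrableOn (fun t => wt P x τ t) (Ioc 0 1) := h.mono_set Ioc_subset_Ioi_self
    refine (h'.const_mul ((1 + τ ^ 2) ^ ((1:ℝ)/2) * Real.exp (x ^ 2 / 2))).mono'
      (bpr_meas P).aestronglyMeasurable ?_
    filter_upwards [ae_restrict_mem measurableSet_Ioc] with t ht
    have hb := bpr_nonneg P t ht.1
    rw [Real.norm_of_nonneg hb]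
    have h1 : 0 < 1 + t * τ ^ 2 := by have := ht.1; positivity
    have e : wt P x τ t = (1 + t * τ ^ 2) ^ (-(1:ℝ)/2) *
        Real.exp (-x ^ 2 / (2 * (1 + t * τ ^ 2))) * bpr P t := by
      unfold wt bpr; ring
    rw [e]
    have h2 : 1 ≤ (1 + τ ^ 2) ^ ((1:ℝ)/2) * (1 + t * τ ^ 2) ^ (-(1:ℝ)/2) := by
      rw [show -(1:ℝ)/2 = -(1/2) by norm_num, Real.rpow_neg h1.le, ← div_eq_mul_inv,
        one_le_div (by positivity)]
      apply Real.rpow_le_rpow h1.le _ (by norm_num)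
      nlinarith [ht.2, sq_nonneg τ]
    have h3 : 1 ≤ Real.exp (x ^ 2 / 2) * Real.exp (-x ^ 2 / (2 * (1 + t * τ ^ 2))) := by
      rw [← Real.exp_add, Real.one_le_exp_iff, neg_div]
      have : x ^ 2 / (2 * (1 + t * τ ^ 2)) ≤ x ^ 2 / 2 := by
        apply div_le_div_of_nonneg_left (sq_nonneg x) (by norm_num)
        nlinarith [mul_nonneg ht.1.le (sq_nonneg τ)]
      linarith
    calc bpr P t = 1 * 1 * bpr P t := by ring
      _ ≤ ((1 + τ ^ 2) ^ ((1:ℝ)/2) * (1 + t * τ ^ 2) ^ (-(1:ℝ)/2)) *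
        (Real.exp (x ^ 2 / 2) * Real.exp (-x ^ 2 / (2 * (1 + t * τ ^ 2)))) * bpr P t := by gcongr
      _ = _ := by ring
  · have ha := P.a_pos
    refine ((integrableOn_Ioi_rpow_of_lt (a := -P.a - 1) (by linarith)
      (zero_lt_one' ℝ)).mul_const P.M).mono' (bpr_meas P).aestronglyMeasurable ?_
    filter_upwards [ae_restrict_mem measurableSet_Ioi] with t ht
    have ht0 : 0 < t := lt_trans one_pos ht
    rw [Real.norm_of_nonneg (bpr_nonneg P t ht0)]
    unfold bpr
    have := P.L_le t ht0
    gcongr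

lemma inv_sq_exp (c u : ℝ) (hc0 : 0 < c) (hu : 0 < u) :
    u⁻¹ * u⁻¹ * Real.exp (-(c / u)) ≤ (1 + 2 / c ^ 2) * (1 + u ^ 2)⁻¹ := by
  have hz : 0 < c / u := by positivity
  have hq : 1 + (c / u) + (c / u) ^ 2 / 2 ≤ Real.exp (c / u) := Real.quadratic_le_exp_of_nonneg hz.le
  have hE : Real.exp (-(c / u)) * Real.exp (c / u) = 1 := by
    rw [← Real.exp_add]; simp
  have hE0 := Real.exp_pos (-(c / u))
  have hE1 : Real.exp (-(c / u)) ≤ 1 := by rw [Real.exp_le_one_iff]; linarith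
  have hE2 : Real.exp (-(c / u)) * ((c / u) ^ 2) ≤ 2 := by nlinarith
  have hE3 : Real.exp (-(c / u)) ≤ 2 / c ^ 2 * u ^ 2 := by
    have : Real.exp (-(c / u)) = Real.exp (-(c / u)) * ((c / u) ^ 2) * (u ^ 2 / c ^ 2) := by
      field_simp
    rw [this]
    calc _ ≤ 2 * (u ^ 2 / c ^ 2) := by gcongr
      _ = _ := by ring
  rw [← div_eq_mul_inv (1 + 2 / c ^ 2), le_div_iff₀ (by positivity)]
  have : u⁻¹ * u⁻¹ * Real.exp (-(c / u)) * (1 + u ^ 2)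
    = (Real.exp (-(c / u))) / u ^ 2 + Real.exp (-(c / u)) := by field_simp
  rw [this]
  have : Real.exp (-(c / u)) / u ^ 2 ≤ 2 / c ^ 2 := by
    rw [div_le_iff₀ (by positivity)]; exact hE3
  linarith

lemma joint_bd (P : Prior) (ha : P.a = 1/2) (τ x θ c : ℝ) (hτ : 0 < τ)
    (hc : c = θ ^ 2 / (2 * τ ^ 2)) (hc0 : 0 < c) (u : ℝ) (hu : 0 < u) :
    joint P τ x θ u ≤ (P.K * P.M * (Real.sqrt (2 * Real.pi * τ ^ 2))⁻¹ * (1 + 2 / c ^ 2)) *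
      (1 + u ^ 2)⁻¹ := by
  have hK := P.K_pos
  have hM := P.M_pos
  unfold joint
  rw [rpow_a P ha u hu]
  have e1 : Real.sqrt (2 * Real.pi * u * τ ^ 2) = Real.sqrt (2 * Real.pi * τ ^ 2) * Real.sqrt u := by
    rw [← Real.sqrt_mul (by positivity)]; congr 1; ring
  have e2 : -θ ^ 2 / (2 * u * τ ^ 2) = -(c / u) := by
    rw [hc]; field_simp
  rw [e1, e2]
  have hsu : (Real.sqrt u)⁻¹ * (Real.sqrt u)⁻¹ = u⁻¹ := by
    rw [← mul_inv, Real.mul_self_sqrt hu.le]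
  have h1 : Real.exp (-(x - θ) ^ 2 / 2) ≤ 1 := by
    rw [Real.exp_le_one_iff, neg_div]; simp only [Left.neg_nonpos_iff]; positivity
  have hL := P.L_le u hu
  have hL0 := P.L_pos u hu
  have key := inv_sq_exp c u hc0 hu
  have hA : 0 ≤ (Real.sqrt (2 * Real.pi * τ ^ 2))⁻¹ := by positivity
  generalize (Real.sqrt (2 * Real.pi * τ ^ 2)) = A at *
  generalize Real.exp (-(x - θ) ^ 2 / 2) = E at *
  have h3 : P.K * P.L u * A⁻¹ * (u⁻¹ * u⁻¹ * Real.exp (-(c / u))) ≤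
      P.K * P.M * A⁻¹ * ((1 + 2 / c ^ 2) * (1 + u ^ 2)⁻¹) := by
    apply mul_le_mul _ key (by positivity) (by positivity)
    gcongr
  have h4 : 0 ≤ P.K * P.L u * A⁻¹ * (u⁻¹ * u⁻¹ * Real.exp (-(c / u))) := by positivity
  calc _ = E * (P.K * P.L u * A⁻¹ *
        (((Real.sqrt u)⁻¹ * (Real.sqrt u)⁻¹) * u⁻¹ * Real.exp (-(c / u)))) := by
        rw [mul_inv]; ring
    _ = E * (P.K * P.L u * A⁻¹ * (u⁻¹ * u⁻¹ * Real.exp (-(c / u)))) := by rw [hsu]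
    _ ≤ 1 * (P.K * P.L u * A⁻¹ * (u⁻¹ * u⁻¹ * Real.exp (-(c / u)))) :=
        mul_le_mul_of_nonneg_right h1 h4
    _ ≤ P.K * P.M * A⁻¹ * ((1 + 2 / c ^ 2) * (1 + u ^ 2)⁻¹) := by rw [one_mul]; exact h3
    _ = _ := by ring

lemma joint_int_u (P : Prior) (ha : P.a = 1/2) (τ x θ : ℝ) (hτ : 0 < τ) (hθ : θ ≠ 0) :
    IntegrableOn (fun u => joint P τ x θ u) (Ioi 0) := by
  obtain ⟨c, hc⟩ : ∃ c, c = θ ^ 2 / (2 * τ ^ 2) := ⟨_, rfl⟩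
  have hc0 : 0 < c := by rw [hc]; positivity
  have hm : Measurable (fun u => joint P τ x θ u) := by
    have := P.L_meas
    unfold joint
    fun_prop
  obtain ⟨C, hC⟩ : ∃ C, C = P.K * P.M * (Real.sqrt (2 * Real.pi * τ ^ 2))⁻¹ * (1 + 2 / c ^ 2) :=
    ⟨_, rfl⟩
  have hi : IntegrableOn (fun u : ℝ => C * (1 + u ^ 2)⁻¹) (Ioi 0) :=
    (integrable_inv_one_add_sq.const_mul C).integrableOn
  refine Integrable.mono' hi hm.aestronglyMeasurable ?_
  filter_upwards [ae_restrict_mem measurableSet_Ioi] with u hu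
  rw [Real.norm_of_nonneg (joint_nonneg P τ x θ u hu), hC]
  exact joint_bd P ha τ x θ c hτ hc hc0 u hu

lemma postw_integral_zero (P : Prior) (ha : P.a = 1/2) (τ x : ℝ) (hτ : 0 < τ)
    (hb : ¬ IntegrableOn (bpr P) (Ioi 0)) : ∫ θ, postw P τ x θ = 0 := by
  apply integral_undef
  intro h
  apply hb
  apply bpr_int_of_wt P x τ
  have hjint : Integrable (fun z : ℝ × ℝ => joint P τ x z.1 z.2)
      ((volume : Measure ℝ).prod (volume.restrict (Ioi (0:ℝ)))) := by
    rw [integrable_prod_iff (joint_meas P τ x).aestronglyMeasurable]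
    constructor
    · have : ∀ᵐ θ : ℝ, θ ≠ 0 := by simp [ae_iff]
      filter_upwards [this] with θ hθ
      exact joint_int_u P ha τ x θ hτ hθ
    · refine h.congr (Eventually.of_forall fun θ => ?_)
      simp only
      rw [postw_eq]
      refine setIntegral_congr_fun measurableSet_Ioi ?_
      intro u hu
      simp only
      rw [Real.norm_of_nonneg (joint_nonneg P τ x θ u hu)]
  have h2 := hjint.integral_prod_right
  have hK := P.K_pos
  have h3 := h2.const_mul (P.K⁻¹)
  refine h3.congr ?_
  filter_upwards [ae_restrict_mem measurableSet_Ioi] with u hu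
  rw [(joint_mass P τ x u hτ hu).2]
  field_simp

lemma postw_nonneg (P : Prior) (τ x θ : ℝ) : 0 ≤ postw P τ x θ := by
  rw [postw_eq]
  exact setIntegral_nonneg measurableSet_Ioi fun u hu => joint_nonneg P τ x θ u hu

end OneGroup

namespace OneGroup

lemma wt_eq (P : Prior) (ha : P.a = 1/2) (x τ t : ℝ) (ht : 0 < t) :
    wt P x τ t = (Real.sqrt (1 + t * τ ^ 2))⁻¹ * ((Real.sqrt t)⁻¹ * t⁻¹) * P.L t *
      Real.exp (-x ^ 2 / (2 * (1 + t * τ ^ 2))) := by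
  unfold wt
  rw [rpow_a P ha t ht, rpow_half _ (by positivity)]

lemma wt_lower (P : Prior) (hb : IntegrableOn (bpr P) (Ioi 0)) (x τ p q m : ℝ) (hp : 0 ≤ p)
    (hpq : p ≤ q) (h : ∀ t, p < t → t ≤ q → m ≤ wt P x τ t) :
    m * (q - p) ≤ ∫ t in Ioi (0:ℝ), wt P x τ t := by
  have hsub : Ioc p q ⊆ Ioi (0:ℝ) := fun t ht => lt_of_le_of_lt hp ht.1
  have hi := wt_int P hb x τ
  calc m * (q - p) = ∫ t in Ioc p q, m := by
        simp [hpq, mul_comm]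
    _ ≤ ∫ t in Ioc p q, wt P x τ t := by
        apply setIntegral_mono_on _ (hi.mono_set hsub) measurableSet_Ioc
        · intro t ht; exact h t ht.1 ht.2
        · simp
    _ ≤ _ := by
        apply setIntegral_mono_set hi
        · filter_upwards [ae_restrict_mem measurableSet_Ioi] with t ht
          exact (wt_pos P x τ t ht).le
        · exact hsub.eventuallyLE

lemma D_lower_a (P : Prior) (ha : P.a = 1/2) (hb : IntegrableOn (bpr P) (Ioi 0)) :
    ∃ d > 0, ∀ τ, 0 < τ → τ ≤ 1 → ∀ x,
      d * Real.exp (-x ^ 2 / 2) ≤ ∫ t in Ioi (0:ℝ), wt P x τ t := by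
  have ht0 := P.t₀_pos
  have hc0 := P.c₀_pos
  refine ⟨(Real.sqrt (1 + (P.t₀ + 1)))⁻¹ * ((Real.sqrt (P.t₀ + 1))⁻¹ * (P.t₀ + 1)⁻¹) * P.c₀,
    by positivity, ?_⟩
  intro τ hτ hτ1 x
  have := wt_lower P hb x τ P.t₀ (P.t₀ + 1)
    ((Real.sqrt (1 + (P.t₀ + 1)))⁻¹ * ((Real.sqrt (P.t₀ + 1))⁻¹ * (P.t₀ + 1)⁻¹) * P.c₀ *
      Real.exp (-x ^ 2 / 2)) ht0.le (by linarith) ?_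
  · simpa using this
  intro t h1 h2
  have ht : 0 < t := by linarith
  rw [wt_eq P ha x τ t ht]
  have hL := P.L_ge t h1.le
  have hLp := P.L_pos t ht
  have hτ2 : τ ^ 2 ≤ 1 := by nlinarith
  have hs : t * τ ^ 2 ≤ P.t₀ + 1 := by nlinarith [sq_nonneg τ]
  have he : -x ^ 2 / 2 ≤ -x ^ 2 / (2 * (1 + t * τ ^ 2)) := by
    rw [neg_div, neg_div, neg_le_neg_iff]
    apply div_le_div_of_nonneg_left (sq_nonneg x) (by norm_num)
    nlinarith [mul_nonneg ht.le (sq_nonneg τ)]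
  gcongr

lemma D_lower_b (P : Prior) (ha : P.a = 1/2) (hb : IntegrableOn (bpr P) (Ioi 0)) :
    ∃ d > 0, ∀ τ, 0 < τ → P.t₀ * τ ^ 2 ≤ 1 → ∀ x : ℝ, 1 ≤ x ^ 2 →
      d * (τ / x ^ 2) ≤ ∫ t in Ioi (0:ℝ), wt P x τ t := by
  have ht0 := P.t₀_pos
  have hc0 := P.c₀_pos
  refine ⟨P.c₀ * Real.exp (-1/2) / (2 * Real.sqrt 6), by positivity, ?_⟩
  intro τ hτ hτ1 x hx
  have hx0 : 0 < x ^ 2 := by linarith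
  have hpos : 0 < x ^ 2 / τ ^ 2 := by positivity
  have := wt_lower P hb x τ (x ^ 2 / τ ^ 2) (2 * (x ^ 2 / τ ^ 2))
    ((Real.sqrt (3 * x ^ 2))⁻¹ * ((Real.sqrt (2 * (x ^ 2 / τ ^ 2)))⁻¹ * (2 * (x ^ 2 / τ ^ 2))⁻¹) *
      P.c₀ * Real.exp (-1/2)) hpos.le (by linarith) ?_
  · refine le_trans (le_of_eq ?_) this
    have e : Real.sqrt (3 * x ^ 2) * Real.sqrt (2 * (x ^ 2 / τ ^ 2)) = Real.sqrt 6 * (x ^ 2 / τ) := by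
      rw [← Real.sqrt_mul (by positivity)]
      have : 3 * x ^ 2 * (2 * (x ^ 2 / τ ^ 2)) = 6 * (x ^ 2 / τ) ^ 2 := by field_simp; ring
      rw [this, Real.sqrt_mul (by norm_num), Real.sqrt_sq (by positivity)]
    calc _ = (Real.sqrt 6 * (x ^ 2 / τ))⁻¹ * (2 * (x ^ 2 / τ ^ 2))⁻¹ * P.c₀ * Real.exp (-1/2) *
          (x ^ 2 / τ ^ 2) := by field_simp
      _ = _ := by rw [← e, mul_inv]; ring
  intro t h1 h2
  have ht : 0 < t := by linarith
  have hs1 : x ^ 2 < t * τ ^ 2 := by rwa [div_lt_iff₀ (by positivity)] at h1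
  have hs2 : t * τ ^ 2 ≤ 2 * x ^ 2 := by
    have := mul_le_mul_of_nonneg_right h2 (sq_nonneg τ)
    have e : 2 * (x ^ 2 / τ ^ 2) * τ ^ 2 = 2 * x ^ 2 := by field_simp
    linarith
  have htt : P.t₀ ≤ t := by
    have : P.t₀ * τ ^ 2 ≤ t * τ ^ 2 := by linarith
    exact le_of_mul_le_mul_right this (by positivity)
  rw [wt_eq P ha x τ t ht]
  have hL := P.L_ge t htt
  have hLp := P.L_pos t ht
  have he : (-1:ℝ) / 2 ≤ -x ^ 2 / (2 * (1 + t * τ ^ 2)) := by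
    rw [neg_div, neg_div, neg_le_neg_iff, div_le_div_iff₀ (by positivity) (by norm_num)]
    nlinarith
  gcongr
  linarith

lemma qderiv (τ t : ℝ) (ht : 0 ≤ t) :
    HasDerivAt (fun t => t * τ ^ 2 / (1 + t * τ ^ 2)) (τ ^ 2 / (1 + t * τ ^ 2) ^ 2) t := by
  have h1 : (1 + t * τ ^ 2) ≠ 0 := by positivity
  have ha : HasDerivAt (fun t => t * τ ^ 2) (τ ^ 2) t := by
    simpa using (hasDerivAt_id t).mul_const (τ ^ 2)
  have := ha.div (ha.const_add 1) h1
  refine this.congr_deriv ?_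
  congr 1
  ring

lemma qlim (τ : ℝ) (hτ : 0 < τ) :
    Tendsto (fun t => t * τ ^ 2 / (1 + t * τ ^ 2)) atTop (nhds 1) := by
  have h : Tendsto (fun t : ℝ => 1 + t * τ ^ 2) atTop atTop :=
    tendsto_atTop_add_const_left _ _ (tendsto_id.atTop_mul_const (by positivity))
  have h2 : Tendsto (fun t : ℝ => 1 - (1 + t * τ ^ 2)⁻¹) atTop (nhds (1 - 0)) :=
    tendsto_const_nhds.sub (tendsto_inv_atTop_zero.comp h)
  rw [sub_zero] at h2
  refine h2.congr' ?_
  filter_upwards [eventually_gt_atTop 0] with t ht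
  have : (1 + t * τ ^ 2) ≠ 0 := by positivity
  field_simp
  ring

lemma kint (τ : ℝ) (hτ : 0 < τ) :
    IntegrableOn (fun t : ℝ => τ ^ 2 / (1 + t * τ ^ 2) ^ 2) (Ioi 0) ∧
    ∫ t in Ioi (0:ℝ), τ ^ 2 / (1 + t * τ ^ 2) ^ 2 = 1 := by
  constructor
  · exact integrableOn_Ioi_deriv_of_nonneg' (fun t ht => qderiv τ t ht)
      (fun t ht => by positivity) (qlim τ hτ)
  · rw [integral_Ioi_of_hasDerivAt_of_nonneg' (fun t ht => qderiv τ t ht)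
      (fun t ht => by positivity) (qlim τ hτ)]
    simp

/-- derivative of the antiderivative for the first numerator. -/
def gder (x τ t : ℝ) : ℝ :=
  (t * τ ^ 2 / (1 + t * τ ^ 2) + x ^ 2 * (t * τ ^ 2 / (1 + t * τ ^ 2)) ^ 2) *
    ((Real.sqrt (1 + t * τ ^ 2))⁻¹ * ((Real.sqrt t)⁻¹ * t⁻¹) *
      Real.exp (-x ^ 2 / (2 * (1 + t * τ ^ 2))))

lemma gder_int (x τ : ℝ) (hτ : 0 < τ) :
    IntegrableOn (gder x τ) (Ioi 0) ∧ ∫ t in Ioi (0:ℝ), gder x τ t = 2 * τ := by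
  set G : ℝ → ℝ := fun t => 2 * τ * (Real.sqrt (t * τ ^ 2 / (1 + t * τ ^ 2)) *
    Real.exp (-x ^ 2 / 2 * (1 - t * τ ^ 2 / (1 + t * τ ^ 2)))) with hG
  have hcont : ContinuousWithinAt G (Ici 0) 0 := by
    apply ContinuousAt.continuousWithinAt
    have := (qderiv τ 0 le_rfl).continuousAt
    exact continuousAt_const.mul (this.sqrt.mul
      (continuousAt_const.mul (continuousAt_const.sub this)).rexp)
  have hlim : Tendsto G atTop (nhds (2 * τ)) := by
    have h := qlim τ hτ
    have h2 : Tendsto G atTop (nhds (2 * τ * (Real.sqrt 1 * Real.exp (-x ^ 2 / 2 * (1 - 1))))) :=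
      tendsto_const_nhds.mul (h.sqrt.mul ((Real.continuous_exp.tendsto _).comp
        (tendsto_const_nhds.mul (tendsto_const_nhds.sub h))))
    simpa using h2
  have hd : ∀ t ∈ Ioi (0:ℝ), HasDerivAt G (gder x τ t) t := by
    intro t ht
    have ht : 0 < t := ht
    have hq0 : 0 < t * τ ^ 2 / (1 + t * τ ^ 2) := by positivity
    have hq := qderiv τ t ht.le
    have h1 := hq.sqrt hq0.ne'
    have h2 := ((hq.const_sub 1).const_mul (-x ^ 2 / 2)).exp
    have h3 := (h1.mul h2).const_mul (2 * τ)
    refine h3.congr_deriv ?_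
    unfold gder
    have e1 : Real.sqrt (t * τ ^ 2 / (1 + t * τ ^ 2))
        = Real.sqrt t * τ / Real.sqrt (1 + t * τ ^ 2) := by
      rw [Real.sqrt_div (by positivity), Real.sqrt_mul ht.le, Real.sqrt_sq hτ.le]
    have e2 : -x ^ 2 / 2 * (1 - t * τ ^ 2 / (1 + t * τ ^ 2)) = -x ^ 2 / (2 * (1 + t * τ ^ 2)) := by
      field_simp; ring
    rw [e1, e2]
    generalize Real.exp (-x ^ 2 / (2 * (1 + t * τ ^ 2))) = E
    have ha : 0 < Real.sqrt t := by positivity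
    have hb : 0 < Real.sqrt (1 + t * τ ^ 2) := by positivity
    have ha2 : Real.sqrt t ^ 2 = t := Real.sq_sqrt ht.le
    have hb2 : Real.sqrt (1 + t * τ ^ 2) ^ 2 = 1 + t * τ ^ 2 := Real.sq_sqrt (by positivity)
    set A := Real.sqrt t
    set B := Real.sqrt (1 + t * τ ^ 2)
    have hbt : 1 + t * τ ^ 2 = B ^ 2 := hb2.symm
    rw [hbt]
    rw [← ha2]
    field_simp
  have hp : ∀ t ∈ Ioi (0:ℝ), 0 ≤ gder x τ t := by
    intro t ht
    have ht : 0 < t := ht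
    unfold gder; positivity
  refine ⟨integrableOn_Ioi_deriv_of_nonneg hcont hd hp hlim, ?_⟩
  rw [integral_Ioi_of_hasDerivAt_of_nonneg hcont hd hp hlim]
  simp [hG]

lemma q_bd (τ t : ℝ) (ht : 0 < t) : 0 ≤ t * τ ^ 2 / (1 + t * τ ^ 2) ∧
    t * τ ^ 2 / (1 + t * τ ^ 2) ≤ 1 := by
  refine ⟨by positivity, ?_⟩
  rw [div_le_one (by positivity)]; linarith

lemma k_bd (τ t : ℝ) (ht : 0 < t) : 0 ≤ 1 / (1 + t * τ ^ 2) ∧ 1 / (1 + t * τ ^ 2) ≤ 1 := by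
  refine ⟨by positivity, ?_⟩
  rw [div_le_one (by positivity)]; nlinarith [mul_nonneg ht.le (sq_nonneg τ)]

lemma q_eq (τ t : ℝ) (ht : 0 < t) :
    t * τ ^ 2 / (1 + t * τ ^ 2) = 1 - 1 / (1 + t * τ ^ 2) := by
  have : 1 + t * τ ^ 2 ≠ 0 := by positivity
  field_simp; ring

lemma num1 (P : Prior) (ha : P.a = 1/2) (x τ : ℝ) (hτ : 0 < τ) :
    ∫ t in Ioi (0:ℝ), (t * τ ^ 2 / (1 + t * τ ^ 2) + x ^ 2 * (t * τ ^ 2 / (1 + t * τ ^ 2)) ^ 2) *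
      wt P x τ t ≤ 2 * P.M * τ := by
  have h := gder_int x τ hτ
  calc _ ≤ ∫ t in Ioi (0:ℝ), P.M * gder x τ t := by
        apply integral_mono_of_nonneg
        · filter_upwards [ae_restrict_mem measurableSet_Ioi] with t ht
          have ht : 0 < t := ht
          have := (wt_pos P x τ t ht).le
          simp only [Pi.zero_apply]
          positivity
        · exact h.1.const_mul _
        · filter_upwards [ae_restrict_mem measurableSet_Ioi] with t ht
          have ht : 0 < t := ht
          rw [wt_eq P ha x τ t ht]
          unfold gder
          have hL := P.L_le t ht
          refine le_trans (le_of_eq ?_) (mul_le_mul_of_nonneg_right hL ?_)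
          · ring
          · positivity
    _ = _ := by rw [integral_const_mul, h.2]; ring

lemma expo_bd (X s : ℝ) (hX : 1 ≤ X) (hs : 1 < s * X) :
    X ^ 2 * Real.exp (-X / (2 * (1 + s))) ≤ 6144 * s ^ 2 := by
  have hs0 : 0 < s := by
    by_contra h
    nlinarith
  by_cases h1 : 1 ≤ s
  · have hz : 0 ≤ X / (2 * (1 + s)) := by positivity
    have h2 := Real.pow_div_factorial_le_exp _ hz 2
    have hE : Real.exp (-X / (2 * (1 + s))) * Real.exp (X / (2 * (1 + s))) = 1 := by
      rw [← Real.exp_add, neg_div]; simp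
    have hE0 := Real.exp_pos (-X / (2 * (1 + s)))
    have h3 : Real.exp (-X / (2 * (1 + s))) * (X / (2 * (1 + s))) ^ 2 ≤ 2 := by
      norm_num [Nat.factorial] at h2
      nlinarith
    have h4 : X ^ 2 * Real.exp (-X / (2 * (1 + s)))
        = 4 * (1 + s) ^ 2 * (Real.exp (-X / (2 * (1 + s))) * (X / (2 * (1 + s))) ^ 2) := by
      field_simp; norm_num
    rw [h4]
    calc _ ≤ 4 * (1 + s) ^ 2 * 2 := by gcongr
      _ ≤ _ := by nlinarith
  · push Not at h1
    have h5 : Real.exp (-X / (2 * (1 + s))) ≤ Real.exp (-(X / 4)) := by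
      apply Real.exp_le_exp.2
      rw [neg_div, neg_le_neg_iff]
      apply div_le_div_of_nonneg_left (by linarith) (by positivity); linarith
    have hz : 0 ≤ X / 4 := by positivity
    have h2 := Real.pow_div_factorial_le_exp _ hz 4
    have hE : Real.exp (-(X / 4)) * Real.exp (X / 4) = 1 := by
      rw [← Real.exp_add]; simp
    have hE0 := Real.exp_pos (-(X / 4))
    have h3 : Real.exp (-(X / 4)) * X ^ 4 ≤ 6144 := by
      norm_num [Nat.factorial] at h2
      have : X ^ 4 ≤ 6144 * Real.exp (X / 4) := by nlinarith
      calc _ ≤ Real.exp (-(X / 4)) * (6144 * Real.exp (X / 4)) := by gcongr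
        _ = 6144 * (Real.exp (-(X / 4)) * Real.exp (X / 4)) := by ring
        _ = _ := by rw [hE]; ring
    have h6 : 1 ≤ (s * X) ^ 2 := by nlinarith
    calc X ^ 2 * Real.exp (-X / (2 * (1 + s))) ≤ X ^ 2 * Real.exp (-(X / 4)) * 1 := by
          rw [mul_one]; gcongr
      _ ≤ X ^ 2 * Real.exp (-(X / 4)) * (s * X) ^ 2 := by gcongr
      _ = (Real.exp (-(X / 4)) * X ^ 4) * s ^ 2 := by ring
      _ ≤ _ := by gcongr

lemma num2_pt (P : Prior) (ha : P.a = 1/2) (x τ t : ℝ) (hτ : 0 < τ) (hx : 1 ≤ x ^ 2)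
    (ht : 0 < t) : (1 / (1 + t * τ ^ 2)) ^ 2 * wt P x τ t ≤
      Real.exp (1/2) * Real.exp (-x ^ 2 / 2) * bpr P t +
      6144 * P.M * τ / x ^ 4 * (τ ^ 2 / (1 + t * τ ^ 2) ^ 2) := by
  have hM := P.M_pos
  have hL := P.L_pos t ht
  have hLM := P.L_le t ht
  have hb := bpr_nonneg P t ht
  have hk := k_bd τ t ht
  have hw := (wt_pos P x τ t ht).le
  have hx0 : 0 < x ^ 2 := by linarith
  by_cases hs : t * τ ^ 2 * x ^ 2 ≤ 1
  · have h1 : wt P x τ t ≤ Real.exp (1/2) * Real.exp (-x ^ 2 / 2) * bpr P t := by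
      have e : wt P x τ t = (1 + t * τ ^ 2) ^ (-(1:ℝ)/2) *
          Real.exp (-x ^ 2 / (2 * (1 + t * τ ^ 2))) * bpr P t := by
        unfold wt bpr; ring
      rw [e]
      have h2 : (1 + t * τ ^ 2) ^ (-(1:ℝ)/2) ≤ 1 :=
        Real.rpow_le_one_of_one_le_of_nonpos (by nlinarith [mul_nonneg ht.le (sq_nonneg τ)])
          (by norm_num)
      have h3 : Real.exp (-x ^ 2 / (2 * (1 + t * τ ^ 2))) ≤ Real.exp (1/2) * Real.exp (-x ^ 2 / 2) := by
        rw [← Real.exp_add]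
        apply Real.exp_le_exp.2
        rw [div_le_iff₀ (by positivity)]
        nlinarith [mul_nonneg ht.le (sq_nonneg τ)]
      calc _ ≤ 1 * (Real.exp (1/2) * Real.exp (-x ^ 2 / 2)) * bpr P t := by gcongr
        _ = _ := by ring
    have h2 : (1 / (1 + t * τ ^ 2)) ^ 2 ≤ 1 := by nlinarith [hk.1, hk.2]
    have h3 : 0 ≤ 6144 * P.M * τ / x ^ 4 * (τ ^ 2 / (1 + t * τ ^ 2) ^ 2) := by positivity
    nlinarith
  · push Not at hs
    have h1 := expo_bd (x ^ 2) (t * τ ^ 2) hx hs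
    have h2 : 0 ≤ Real.exp (1/2) * Real.exp (-x ^ 2 / 2) * bpr P t := by positivity
    have hst : 0 < Real.sqrt t := by positivity
    have hs1 : Real.sqrt t * τ ≤ Real.sqrt (1 + t * τ ^ 2) := by
      apply Real.le_sqrt_of_sq_le
      rw [mul_pow, Real.sq_sqrt ht.le]; linarith
    have h3 : wt P x τ t ≤ 6144 * P.M * τ / x ^ 4 * τ ^ 2 := by
      rw [wt_eq P ha x τ t ht]
      have h4 : (Real.sqrt (1 + t * τ ^ 2))⁻¹ ≤ (Real.sqrt t * τ)⁻¹ := by gcongr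
      have h5 : Real.exp (-x ^ 2 / (2 * (1 + t * τ ^ 2))) ≤ 6144 * (t * τ ^ 2) ^ 2 / (x ^ 2) ^ 2 := by
        rw [le_div_iff₀ (by positivity)]
        linarith
      calc _ ≤ (Real.sqrt t * τ)⁻¹ * ((Real.sqrt t)⁻¹ * t⁻¹) * P.M *
            (6144 * (t * τ ^ 2) ^ 2 / (x ^ 2) ^ 2) := by gcongr
        _ = ((Real.sqrt t)⁻¹ * (Real.sqrt t)⁻¹) * τ⁻¹ * t⁻¹ * P.M *
            (6144 * (t * τ ^ 2) ^ 2 / (x ^ 2) ^ 2) := by rw [mul_inv]; ring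
        _ = t⁻¹ * τ⁻¹ * t⁻¹ * P.M *
            (6144 * (t * τ ^ 2) ^ 2 / (x ^ 2) ^ 2) := by
              rw [← mul_inv, Real.mul_self_sqrt ht.le]
        _ = _ := by field_simp
    calc _ ≤ (1 / (1 + t * τ ^ 2)) ^ 2 * (6144 * P.M * τ / x ^ 4 * τ ^ 2) := by gcongr
      _ = 6144 * P.M * τ / x ^ 4 * (τ ^ 2 / (1 + t * τ ^ 2) ^ 2) := by
        rw [div_pow]; ring
      _ ≤ _ := by linarith

lemma num2 (P : Prior) (ha : P.a = 1/2) (hb : IntegrableOn (bpr P) (Ioi 0))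
    (x τ : ℝ) (hτ : 0 < τ) (hx : 1 ≤ x ^ 2) :
    ∫ t in Ioi (0:ℝ), (1 / (1 + t * τ ^ 2)) ^ 2 * wt P x τ t ≤
      (Real.exp (1/2) * ∫ t in Ioi (0:ℝ), bpr P t) * Real.exp (-x ^ 2 / 2) +
      6144 * P.M * (τ / x ^ 4) := by
  have h := kint τ hτ
  calc _ ≤ ∫ t in Ioi (0:ℝ), (Real.exp (1/2) * Real.exp (-x ^ 2 / 2) * bpr P t +
      6144 * P.M * τ / x ^ 4 * (τ ^ 2 / (1 + t * τ ^ 2) ^ 2)) := by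
        apply integral_mono_of_nonneg
        · filter_upwards [ae_restrict_mem measurableSet_Ioi] with t ht
          have := (wt_pos P x τ t ht).le
          simp only [Pi.zero_apply]
          positivity
        · exact (hb.const_mul _).add (h.1.const_mul _)
        · filter_upwards [ae_restrict_mem measurableSet_Ioi] with t ht
          exact num2_pt P ha x τ t hτ hx ht
    _ = _ := by
      rw [integral_add (hb.const_mul _) (h.1.const_mul _), integral_const_mul, integral_const_mul,
        h.2]
      ring

end OneGroup

namespace OneGroup

/-- posterior variance, in terms of the shrinkage weights -/
def vv (P : Prior) (τ x : ℝ) : ℝ :=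
  (∫ t in Ioi (0:ℝ), wt P x τ t * (t * τ ^ 2 / (1 + t * τ ^ 2) +
    (x * (t * τ ^ 2 / (1 + t * τ ^ 2)) - T P τ x) ^ 2)) / ∫ t in Ioi (0:ℝ), wt P x τ t

lemma I_pos (P : Prior) (ha : P.a = 1/2) (hb : IntegrableOn (bpr P) (Ioi 0)) (τ x : ℝ) :
    0 < ∫ t in Ioi (0:ℝ), wt P x τ t := by
  rw [setIntegral_pos_iff_support_of_nonneg_ae]
  · have : Function.support (fun t => wt P x τ t) ∩ Ioi 0 = Ioi 0 := by
      apply inter_eq_right.2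
      intro t ht
      exact (wt_pos P x τ t ht).ne'
    rw [this]; simp
  · filter_upwards [ae_restrict_mem measurableSet_Ioi] with t ht
    exact (wt_pos P x τ t ht).le
  · exact wt_int P hb x τ

lemma kmeas (τ : ℝ) : Measurable (fun t : ℝ => 1 / (1 + t * τ ^ 2)) := by fun_prop

lemma expand (P : Prior) (hb : IntegrableOn (bpr P) (Ioi 0)) (τ x c : ℝ) :
    IntegrableOn (fun t => (1 - 1 / (1 + t * τ ^ 2) + x ^ 2 * (1 / (1 + t * τ ^ 2) - c) ^ 2) *
      wt P x τ t) (Ioi 0) ∧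
    ∫ t in Ioi (0:ℝ), (1 - 1 / (1 + t * τ ^ 2) + x ^ 2 * (1 / (1 + t * τ ^ 2) - c) ^ 2) *
      wt P x τ t = ((∫ t in Ioi (0:ℝ), wt P x τ t) -
        ∫ t in Ioi (0:ℝ), 1 / (1 + t * τ ^ 2) * wt P x τ t) +
      x ^ 2 * ((∫ t in Ioi (0:ℝ), (1 / (1 + t * τ ^ 2)) ^ 2 * wt P x τ t)
        - 2 * c * (∫ t in Ioi (0:ℝ), 1 / (1 + t * τ ^ 2) * wt P x τ t)
        + c ^ 2 * ∫ t in Ioi (0:ℝ), wt P x τ t) := by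
  have h0 := wt_int P hb x τ
  have h1 : IntegrableOn (fun t => 1 / (1 + t * τ ^ 2) * wt P x τ t) (Ioi 0) :=
    bdd_wt_int P hb x τ _ (kmeas τ) 1 (fun t ht => by
      have := k_bd τ t ht
      rw [abs_of_nonneg this.1]; exact this.2)
  have h2 : IntegrableOn (fun t => (1 / (1 + t * τ ^ 2)) ^ 2 * wt P x τ t) (Ioi 0) :=
    bdd_wt_int P hb x τ _ ((kmeas τ).pow_const 2) 1 (fun t ht => by
      have := k_bd τ t ht
      rw [abs_of_nonneg (by positivity)]; nlinarith)
  have e : (fun t => (1 - 1 / (1 + t * τ ^ 2) + x ^ 2 * (1 / (1 + t * τ ^ 2) - c) ^ 2) *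
      wt P x τ t) = fun t => ((1 + x ^ 2 * c ^ 2) * wt P x τ t
        + (-(1 + 2 * c * x ^ 2)) * (1 / (1 + t * τ ^ 2) * wt P x τ t))
        + x ^ 2 * ((1 / (1 + t * τ ^ 2)) ^ 2 * wt P x τ t) := by
    funext t; ring
  rw [e]
  have i0 := h0.const_mul (1 + x ^ 2 * c ^ 2)
  have i1 := h1.const_mul (-(1 + 2 * c * x ^ 2))
  have i2 := h2.const_mul (x ^ 2)
  have i01 : Integrable (fun t => (1 + x ^ 2 * c ^ 2) * wt P x τ t
      + (-(1 + 2 * c * x ^ 2)) * (1 / (1 + t * τ ^ 2) * wt P x τ t))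
      (volume.restrict (Ioi 0)) := i0.add i1
  refine ⟨i01.add i2, ?_⟩
  rw [integral_add i01 i2, integral_add i0 i1]
  simp only [integral_const_mul]
  ring

lemma vv_le (P : Prior) (ha : P.a = 1/2) (hb : IntegrableOn (bpr P) (Ioi 0)) (τ x c : ℝ) :
    vv P τ x ≤ (∫ t in Ioi (0:ℝ), (1 - 1 / (1 + t * τ ^ 2) +
      x ^ 2 * (1 / (1 + t * τ ^ 2) - c) ^ 2) * wt P x τ t) / ∫ t in Ioi (0:ℝ), wt P x τ t := by
  have hI := I_pos P ha hb τ x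
  unfold vv
  apply div_le_div_of_nonneg_right _ hI.le
  have e : ∫ t in Ioi (0:ℝ), wt P x τ t * (t * τ ^ 2 / (1 + t * τ ^ 2) +
    (x * (t * τ ^ 2 / (1 + t * τ ^ 2)) - T P τ x) ^ 2) = ∫ t in Ioi (0:ℝ), (1 - 1 / (1 + t * τ ^ 2) +
      x ^ 2 * (1 / (1 + t * τ ^ 2) - postExp P (fun κ => κ) x τ) ^ 2) * wt P x τ t := by
    refine setIntegral_congr_fun measurableSet_Ioi ?_
    intro t ht
    simp only
    rw [q_eq τ t ht, T]
    ring
  rw [e, (expand P hb τ x _).2, (expand P hb τ x _).2]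
  have hm : postExp P (fun κ => κ) x τ * (∫ t in Ioi (0:ℝ), wt P x τ t)
      = ∫ t in Ioi (0:ℝ), 1 / (1 + t * τ ^ 2) * wt P x τ t := by
    unfold postExp
    rw [div_mul_cancel₀ _ hI.ne']
  generalize postExp P (fun κ => κ) x τ = m at *
  rw [← hm]
  have := mul_nonneg (sq_nonneg x) (mul_nonneg (sq_nonneg (m - c)) hI.le)
  nlinarith

lemma vv_le_sq (P : Prior) (ha : P.a = 1/2) (hb : IntegrableOn (bpr P) (Ioi 0)) (τ x : ℝ) :
    vv P τ x ≤ 1 + x ^ 2 := by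
  have hI := I_pos P ha hb τ x
  refine (vv_le P ha hb τ x 0).trans ?_
  rw [div_le_iff₀ hI, ← integral_const_mul]
  refine setIntegral_mono_on (expand P hb τ x 0).1 ((wt_int P hb x τ).const_mul _)
    measurableSet_Ioi ?_
  intro t ht
  have hk := k_bd τ t ht
  apply mul_le_mul_of_nonneg_right _ (wt_pos P x τ t ht).le
  have : (1 / (1 + t * τ ^ 2) - 0) ^ 2 ≤ 1 := by nlinarith
  nlinarith [sq_nonneg x]

lemma vv_bounds (P : Prior) (ha : P.a = 1/2) (hb : IntegrableOn (bpr P) (Ioi 0)) :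
    ∃ C, 1 ≤ C ∧ ∀ τ, 0 < τ → τ ≤ 1 → P.t₀ * τ ^ 2 ≤ 1 → ∀ x : ℝ,
      vv P τ x ≤ C * (τ * Real.exp (x ^ 2 / 2)) ∧
      (1 ≤ x ^ 2 → vv P τ x ≤ C * (1 + x ^ 4 * Real.exp (-x ^ 2 / 2) / τ)) := by
  obtain ⟨d, hd, hD⟩ := D_lower_a P ha hb
  obtain ⟨d', hd', hD'⟩ := D_lower_b P ha hb
  have hM := P.M_pos
  set c1 := Real.exp (1/2) * ∫ t in Ioi (0:ℝ), bpr P t with hc1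
  have hc1p : 0 ≤ c1 := mul_nonneg (Real.exp_pos _).le
    (setIntegral_nonneg measurableSet_Ioi fun t ht => bpr_nonneg P t ht)
  refine ⟨1 + 2 * P.M / d + c1 / d' + 6144 * P.M / d', ?_, ?_⟩
  · have : 0 ≤ 2 * P.M / d + c1 / d' + 6144 * P.M / d' := by positivity
    linarith
  intro τ hτ hτ1 hτ2 x
  have hI := I_pos P ha hb τ x
  constructor
  · have h1 := vv_le P ha hb τ x 1
    have e : ∫ t in Ioi (0:ℝ), (1 - 1 / (1 + t * τ ^ 2) +
      x ^ 2 * (1 / (1 + t * τ ^ 2) - 1) ^ 2) * wt P x τ t =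
      ∫ t in Ioi (0:ℝ), (t * τ ^ 2 / (1 + t * τ ^ 2) + x ^ 2 * (t * τ ^ 2 / (1 + t * τ ^ 2)) ^ 2) *
      wt P x τ t := by
      refine setIntegral_congr_fun measurableSet_Ioi ?_
      intro t ht
      simp only
      rw [q_eq τ t ht]
      ring
    rw [e] at h1
    have hE : Real.exp (-x ^ 2 / 2) * Real.exp (x ^ 2 / 2) = 1 := by
      rw [← Real.exp_add, neg_div]; simp
    calc vv P τ x ≤ 2 * P.M * τ / (d * Real.exp (-x ^ 2 / 2)) := by
          refine h1.trans ?_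
          apply div_le_div₀ (by positivity) (num1 P ha x τ hτ) (by positivity) (hD τ hτ hτ1 x)
      _ = 2 * P.M / d * (τ * Real.exp (x ^ 2 / 2)) := by
          rw [div_eq_iff (by positivity)]
          calc 2 * P.M * τ = 2 * P.M * τ * (Real.exp (-x ^ 2 / 2) * Real.exp (x ^ 2 / 2)) := by
                rw [hE]; ring
            _ = _ := by field_simp
      _ ≤ _ := by
          apply mul_le_mul_of_nonneg_right _ (by positivity)
          have : 0 ≤ c1 / d' + 6144 * P.M / d' := by positivity
          linarith
  · intro hx
    have hx0 : 0 < x ^ 2 := by linarith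
    have h1 := vv_le P ha hb τ x 0
    rw [(expand P hb τ x 0).2] at h1
    have h2 := num2 P ha hb x τ hτ hx
    rw [← hc1] at h2
    have h3 := hD' τ hτ hτ2 x hx
    have h4 : 0 ≤ ∫ t in Ioi (0:ℝ), 1 / (1 + t * τ ^ 2) * wt P x τ t :=
      setIntegral_nonneg measurableSet_Ioi fun t ht =>
        mul_nonneg (k_bd τ t ht).1 (wt_pos P x τ t ht).le
    generalize (∫ t in Ioi (0:ℝ), wt P x τ t) = I at *
    generalize (∫ t in Ioi (0:ℝ), 1 / (1 + t * τ ^ 2) * wt P x τ t) = I1 at *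
    generalize (∫ t in Ioi (0:ℝ), (1 / (1 + t * τ ^ 2)) ^ 2 * wt P x τ t) = I2 at *
    have hn : 0 ≤ x ^ 2 * (c1 * Real.exp (-x ^ 2 / 2) + 6144 * P.M * (τ / x ^ 4)) := by positivity
    have hx4 : 0 < x ^ 4 := by
      have := pow_pos hx0 2
      rwa [← pow_mul] at this
    calc vv P τ x ≤ (I + x ^ 2 * (c1 * Real.exp (-x ^ 2 / 2) + 6144 * P.M * (τ / x ^ 4))) / I := by
          refine h1.trans ?_
          apply div_le_div_of_nonneg_right _ hI.le
          have := mul_le_mul_of_nonneg_left h2 hx0.le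
          nlinarith
      _ = 1 + x ^ 2 * (c1 * Real.exp (-x ^ 2 / 2) + 6144 * P.M * (τ / x ^ 4)) / I := by
          rw [add_div, div_self hI.ne']
      _ ≤ 1 + x ^ 2 * (c1 * Real.exp (-x ^ 2 / 2) + 6144 * P.M * (τ / x ^ 4)) /
            (d' * (τ / x ^ 2)) := by
          have : x ^ 2 * (c1 * Real.exp (-x ^ 2 / 2) + 6144 * P.M * (τ / x ^ 4)) / I ≤
            x ^ 2 * (c1 * Real.exp (-x ^ 2 / 2) + 6144 * P.M * (τ / x ^ 4)) /
            (d' * (τ / x ^ 2)) :=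
            div_le_div_of_nonneg_left hn (by positivity) h3
          linarith
      _ = 1 + c1 / d' * (x ^ 4 * Real.exp (-x ^ 2 / 2) / τ) + 6144 * P.M / d' := by
          have hx' : x ≠ 0 := by
            rintro rfl; norm_num at hx0
          field_simp
          ring
      _ ≤ _ := by
          have g1 : 0 ≤ x ^ 4 * Real.exp (-x ^ 2 / 2) / τ := by positivity
          have g2 : 0 ≤ c1 / d' := by positivity
          have g3 : 0 ≤ 6144 * P.M / d' := by positivity
          have g4 : 0 ≤ 2 * P.M / d := by positivity
          nlinarith [mul_nonneg g3 g1, mul_nonneg g4 g1]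

/-- Fubini for sums of one-coordinate functions against a product density. -/
lemma sum_prod {n : ℕ} (f g : Fin n → ℝ → ℝ) (hf : ∀ i, Integrable (f i))
    (hg : ∀ i, Integrable (fun t => g i t * f i t)) (h0 : ∀ i, ∫ t, f i t ≠ 0) :
    Integrable (fun x : Fin n → ℝ => (∑ i, g i (x i)) * ∏ j, f j (x j)) ∧
    ∫ x : Fin n → ℝ, (∑ i, g i (x i)) * ∏ j, f j (x j) =
      (∑ i, (∫ t, g i t * f i t) / ∫ t, f i t) * ∏ j, ∫ t, f j t := by
  classical
  have e : ∀ i, (fun x : Fin n → ℝ => g i (x i) * ∏ j, f j (x j)) =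
      fun x : Fin n → ℝ => ∏ j, (Function.update f i (fun t => g i t * f i t)) j (x j) := by
    intro i
    funext x
    rw [← Finset.mul_prod_erase Finset.univ (fun j => f j (x j)) (Finset.mem_univ i),
      ← Finset.mul_prod_erase Finset.univ _ (Finset.mem_univ i)]
    simp only [Function.update_self]
    rw [← mul_assoc]
    congr 1
    apply Finset.prod_congr rfl
    intro j hj
    rw [Function.update_of_ne (Finset.ne_of_mem_erase hj)]
  have hi : ∀ i, Integrable (fun x : Fin n → ℝ => g i (x i) * ∏ j, f j (x j)) := by
    intro i
    rw [e i]
    apply Integrable.fintype_prod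
    intro j
    by_cases hj : j = i
    · subst hj; simpa using hg j
    · rw [Function.update_of_ne hj]; exact hf j
  have e2 : (fun x : Fin n → ℝ => (∑ i, g i (x i)) * ∏ j, f j (x j)) =
      fun x => ∑ i, g i (x i) * ∏ j, f j (x j) := by
    funext x; rw [Finset.sum_mul]
  rw [e2]
  refine ⟨integrable_finsetSum _ fun i _ => hi i, ?_⟩
  rw [integral_finsetSum _ fun i _ => hi i, Finset.sum_mul]
  apply Finset.sum_congr rfl
  intro i _
  rw [e i, integral_fintype_prod_volume_eq_prod,
    ← Finset.mul_prod_erase Finset.univ _ (Finset.mem_univ i),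
    ← Finset.mul_prod_erase Finset.univ (fun j => ∫ t, f j t) (Finset.mem_univ i)]
  simp only [Function.update_self]
  rw [← mul_assoc, div_mul_cancel₀ _ (h0 i)]
  congr 1
  apply Finset.prod_congr rfl
  intro j hj
  rw [Function.update_of_ne (Finset.ne_of_mem_erase hj)]

lemma postProb_nonneg (P : Prior) (τ : ℝ) {n : ℕ} (x : Fin n → ℝ) (A : Set (Fin n → ℝ)) :
    0 ≤ postProb P τ x A := by
  unfold postProb
  apply div_nonneg
  · exact integral_nonneg fun θ => Finset.prod_nonneg fun i _ => postw_nonneg P τ _ _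
  · exact integral_nonneg fun θ => Finset.prod_nonneg fun i _ => postw_nonneg P τ _ _

lemma postProb_zero (P : Prior) (ha : P.a = 1/2) (τ : ℝ) (hτ : 0 < τ) {n : ℕ} (hn : 0 < n)
    (hb : ¬ IntegrableOn (bpr P) (Ioi 0)) (x : Fin n → ℝ) (A : Set (Fin n → ℝ)) :
    postProb P τ x A = 0 := by
  unfold postProb
  rw [integral_fintype_prod_volume_eq_prod (fun i => postw P τ (x i)),
    Finset.prod_eq_zero (Finset.mem_univ ⟨0, hn⟩) (postw_integral_zero P ha τ _ hτ hb)]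
  simp

lemma postw_facts (P : Prior) (ha : P.a = 1/2) (hb : IntegrableOn (bpr P) (Ioi 0)) (τ x : ℝ)
    (hτ : 0 < τ) : Integrable (fun θ => postw P τ x θ) ∧ 0 < ∫ θ, postw P τ x θ ∧
      Integrable (fun θ => (θ - T P τ x) ^ 2 * postw P τ x θ) ∧
      (∫ θ, (θ - T P τ x) ^ 2 * postw P τ x θ) / ∫ θ, postw P τ x θ = vv P τ x := by
  have hK := P.K_pos
  have hI := I_pos P ha hb τ x
  have h1 := tonelli P τ x (fun _ => 1) measurable_const (fun _ => zero_le_one)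
    (fun u => P.K * wt P x τ u) ((wt_int P hb x τ).const_mul _)
    (fun u hu => by simpa using joint_mass P τ x u hτ hu)
  simp only [one_mul] at h1
  have hq : Measurable (fun t : ℝ => t * τ ^ 2 / (1 + t * τ ^ 2)) := by fun_prop
  have hbd := bdd_wt_int P hb x τ (fun t => t * τ ^ 2 / (1 + t * τ ^ 2) +
    (x * (t * τ ^ 2 / (1 + t * τ ^ 2)) - T P τ x) ^ 2)
    (hq.add (((hq.const_mul x).sub_const _).pow_const 2)) (1 + (|x| + |T P τ x|) ^ 2) (by
      intro t ht
      have h := q_bd τ t ht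
      rw [abs_of_nonneg (by positivity)]
      have : |x * (t * τ ^ 2 / (1 + t * τ ^ 2)) - T P τ x| ≤ |x| + |T P τ x| := by
        refine (abs_sub _ _).trans ?_
        rw [abs_mul, abs_of_nonneg h.1]
        nlinarith [abs_nonneg x]
      have h2 := pow_le_pow_left₀ (abs_nonneg _) this 2
      rw [sq_abs] at h2
      linarith [h.2])
  have hbd' : IntegrableOn (fun t => P.K * (wt P x τ t * (t * τ ^ 2 / (1 + t * τ ^ 2) +
    (x * (t * τ ^ 2 / (1 + t * τ ^ 2)) - T P τ x) ^ 2))) (Ioi 0) := by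
    refine (hbd.congr (Eventually.of_forall fun t => ?_)).const_mul _
    simp only; ring
  have h2 := tonelli P τ x (fun θ => (θ - T P τ x) ^ 2) (by fun_prop) (fun _ => sq_nonneg _)
    _ hbd' (fun u hu => joint_moment P τ x (T P τ x) u hτ hu)
  rw [integral_const_mul] at h1
  have h2b := h2.2
  rw [integral_const_mul] at h2b
  refine ⟨h1.1, ?_, h2.1, ?_⟩
  · rw [h1.2]; positivity
  · rw [h1.2, h2b]
    unfold vv
    rw [mul_div_mul_left _ _ hK.ne']

/-- Markov's inequality for the posterior. -/
lemma markov (P : Prior) (ha : P.a = 1/2) (hb : IntegrableOn (bpr P) (Ioi 0)) (τ : ℝ)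
    (hτ : 0 < τ) {n : ℕ} (x : Fin n → ℝ) (r : ℝ) (hr : 0 < r) :
    postProb P τ x {θ : Fin n → ℝ | r < ∑ i, (θ i - T P τ (x i)) ^ 2} ≤
      (∑ i, vv P τ (x i)) / r := by
  have hF := fun i => postw_facts P ha hb τ (x i) hτ
  have hS := sum_prod (fun i θ => postw P τ (x i) θ) (fun i θ => (θ - T P τ (x i)) ^ 2)
    (fun i => (hF i).1) (fun i => (hF i).2.2.1) (fun i => (hF i).2.1.ne')
  have hD : 0 < ∏ i, ∫ θ, postw P τ (x i) θ := Finset.prod_pos fun i _ => (hF i).2.1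
  unfold postProb
  rw [integral_fintype_prod_volume_eq_prod (fun i => postw P τ (x i)), div_le_iff₀ hD]
  have hm : MeasurableSet {θ : Fin n → ℝ | r < ∑ i, (θ i - T P τ (x i)) ^ 2} := by
    apply measurableSet_lt measurable_const
    fun_prop
  rw [← integral_indicator hm]
  have hv : (∑ i, vv P τ (x i)) / r * ∏ i, ∫ θ, postw P τ (x i) θ
      = ∫ θ : Fin n → ℝ, r⁻¹ * ((∑ i, (θ i - T P τ (x i)) ^ 2) * ∏ j, postw P τ (x j) (θ j)) := by
    rw [integral_const_mul, hS.2]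
    simp only [(hF _).2.2.2]
    ring
  rw [hv]
  apply integral_mono_of_nonneg
  · refine Eventually.of_forall fun θ => ?_
    apply indicator_nonneg
    intro θ _
    exact Finset.prod_nonneg fun i _ => postw_nonneg P τ _ _
  · exact hS.1.const_mul _
  · refine Eventually.of_forall fun θ => ?_
    have hp : 0 ≤ ∏ j, postw P τ (x j) (θ j) := Finset.prod_nonneg fun i _ => postw_nonneg P τ _ _
    have hs : 0 ≤ ∑ i, (θ i - T P τ (x i)) ^ 2 := Finset.sum_nonneg fun i _ => sq_nonneg _
    simp only
    by_cases hθ : θ ∈ {θ : Fin n → ℝ | r < ∑ i, (θ i - T P τ (x i)) ^ 2}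
    · rw [indicator_of_mem hθ]
      have hθ : r < ∑ i, (θ i - T P τ (x i)) ^ 2 := hθ
      have h1 : 1 ≤ r⁻¹ * ∑ i, (θ i - T P τ (x i)) ^ 2 := by
        rw [← div_eq_inv_mul, one_le_div hr]; exact hθ.le
      rw [← mul_assoc]
      nlinarith
    · rw [indicator_of_notMem hθ]
      positivity

end OneGroup

namespace OneGroup

lemma gauss_pos (x : ℝ) : 0 < gauss x := by unfold gauss; positivity

lemma gauss_le (x : ℝ) : gauss x ≤ Real.exp (-x ^ 2 / 2) := by
  unfold gauss
  have h : (Real.sqrt (2 * Real.pi))⁻¹ ≤ 1 := by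
    apply inv_le_one_of_one_le₀
    rw [Real.one_le_sqrt]
    nlinarith [Real.pi_gt_three]
  have := Real.exp_pos (-x ^ 2 / 2)
  nlinarith

lemma gauss_le_one (x : ℝ) : gauss x ≤ 1 := by
  refine (gauss_le x).trans ?_
  rw [Real.exp_le_one_iff]
  nlinarith [sq_nonneg x]

lemma gauss_eq (θ : ℝ) : (fun x => gauss (x - θ)) = ProbabilityTheory.gaussianPDFReal θ 1 := by
  funext x
  simp [gauss, ProbabilityTheory.gaussianPDFReal]

lemma gauss_int (θ : ℝ) : Integrable (fun x => gauss (x - θ)) := by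
  rw [gauss_eq]; exact ProbabilityTheory.integrable_gaussianPDFReal θ 1

lemma gauss_integral (θ : ℝ) : ∫ x, gauss (x - θ) = 1 := by
  rw [gauss_eq]; exact ProbabilityTheory.integral_gaussianPDFReal_eq_one θ one_ne_zero

lemma even_split (u v : ℝ → ℝ) (A : ℝ) (hA : 0 < A) (hu : Continuous u)
    (hv : IntegrableOn v (Ioi A)) :
    Integrable (fun x : ℝ => if |x| ≤ A then u |x| else v |x|) ∧
    ∫ x : ℝ, (if |x| ≤ A then u |x| else v |x|) =
      2 * ((∫ x in (0:ℝ)..A, u x) + ∫ x in Ioi A, v x) := by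
  set G : ℝ → ℝ := fun y => if y ≤ A then u y else v y with hG
  have e1 : EqOn G u (Ioc 0 A) := fun y hy => by simp [hG, hy.2]
  have e2 : EqOn G v (Ioi A) := fun y hy => by
    have : ¬ y ≤ A := not_le.2 hy
    simp [hG, this]
  have i1 : IntegrableOn G (Ioc 0 A) :=
    ((hu.integrableOn_Icc (a := 0) (b := A)).mono_set Ioc_subset_Icc_self).congr_fun e1.symm
      measurableSet_Ioc
  have i2 : IntegrableOn G (Ioi A) := hv.congr_fun e2.symm measurableSet_Ioi
  have hun : Ioc 0 A ∪ Ioi A = Ioi (0:ℝ) := Ioc_union_Ioi_eq_Ioi hA.le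
  have i3 : IntegrableOn G (Ioi 0) := by
    rw [← hun]; exact i1.union i2
  have i4 : IntegrableOn (fun x => G |x|) (Ioi 0) :=
    i3.congr_fun (fun y hy => by rw [abs_of_pos hy]) measurableSet_Ioi
  have i5 : IntegrableOn (fun x => G |x|) (Iio 0) := by
    have := (MeasurePreserving.integrableOn_comp_preimage (Measure.measurePreserving_neg
      (volume : Measure ℝ)) (Homeomorph.neg ℝ).measurableEmbedding
        (f := fun x => G |x|) (s := Ioi 0)).2 i4
    simpa [Function.comp_def] using this
  have i6 : Integrable (fun x => G |x|) := by
    rw [← integrableOn_univ, ← Iic_union_Ioi (a := (0:ℝ))]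
    exact ((integrableOn_Iic_iff_integrableOn_Iio (by simp)).2 i5).union i4
  refine ⟨i6, ?_⟩
  change ∫ x : ℝ, G |x| = _
  rw [integral_comp_abs, ← hun, setIntegral_union _ measurableSet_Ioi i1 i2,
    setIntegral_congr_fun measurableSet_Ioc e1, setIntegral_congr_fun measurableSet_Ioi e2,
    intervalIntegral.integral_of_le hA.le]
  exact Set.disjoint_left.2 fun y hy h => not_le.2 h hy.2

lemma pow_exp_lim (k : ℕ) :
    Tendsto (fun y : ℝ => y ^ k * Real.exp (-y ^ 2 / 2)) atTop (nhds 0) := by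
  refine squeeze_zero' (f := fun y : ℝ => y ^ k * Real.exp (-y ^ 2 / 2)) ?_ ?_
    (Real.tendsto_pow_mul_exp_neg_atTop_nhds_zero k)
  · filter_upwards [eventually_ge_atTop 0] with y hy
    positivity
  · filter_upwards [eventually_ge_atTop 2] with y hy
    have : 0 ≤ y := by linarith
    gcongr
    nlinarith

lemma exp_sq_deriv (y : ℝ) :
    HasDerivAt (fun y : ℝ => Real.exp (-y ^ 2 / 2)) (-y * Real.exp (-y ^ 2 / 2)) y := by
  have h : HasDerivAt (fun y : ℝ => -y ^ 2 / 2) (-y) y := by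
    have := ((hasDerivAt_pow 2 y).neg).div_const 2
    refine HasDerivAt.congr_deriv this ?_
    simp
    try ring
  convert h.exp using 1
  ring

lemma tail1 (A : ℝ) (hA : 2 ≤ A) :
    IntegrableOn (fun y : ℝ => 3 * (y ^ 2 - 1) * Real.exp (-y ^ 2 / 2)) (Ioi A) ∧
    ∫ y in Ioi A, 3 * (y ^ 2 - 1) * Real.exp (-y ^ 2 / 2) = 3 * A * Real.exp (-A ^ 2 / 2) := by
  have hd : ∀ y ∈ Ici A, HasDerivAt (fun y : ℝ => -3 * (y ^ 1 * Real.exp (-y ^ 2 / 2)))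
      (3 * (y ^ 2 - 1) * Real.exp (-y ^ 2 / 2)) y := by
    intro y hy
    have := (((hasDerivAt_pow 1 y).mul (exp_sq_deriv y)).const_mul (-3))
    refine HasDerivAt.congr_deriv this ?_
    simp
    try ring
  have hp : ∀ y ∈ Ioi A, 0 ≤ 3 * (y ^ 2 - 1) * Real.exp (-y ^ 2 / 2) := by
    intro y hy
    have hy' : A < y := hy
    have : 0 ≤ y ^ 2 - 1 := by nlinarith
    positivity
  have hl : Tendsto (fun y : ℝ => -3 * (y ^ 1 * Real.exp (-y ^ 2 / 2))) atTop (nhds 0) := by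
    simpa using (pow_exp_lim 1).const_mul (-3)
  refine ⟨integrableOn_Ioi_deriv_of_nonneg' hd hp hl, ?_⟩
  rw [integral_Ioi_of_hasDerivAt_of_nonneg' hd hp hl]
  ring

lemma tail2 (A c : ℝ) (hA : 2 ≤ A) (hc : 0 ≤ c) :
    IntegrableOn (fun y : ℝ => c * (y ^ 4 - 3 * y ^ 2) * Real.exp (-y ^ 2 / 2)) (Ioi A) ∧
    ∫ y in Ioi A, c * (y ^ 4 - 3 * y ^ 2) * Real.exp (-y ^ 2 / 2) =
      c * A ^ 3 * Real.exp (-A ^ 2 / 2) := by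
  have hd : ∀ y ∈ Ici A, HasDerivAt (fun y : ℝ => -c * (y ^ 3 * Real.exp (-y ^ 2 / 2)))
      (c * (y ^ 4 - 3 * y ^ 2) * Real.exp (-y ^ 2 / 2)) y := by
    intro y hy
    have := (((hasDerivAt_pow 3 y).mul (exp_sq_deriv y)).const_mul (-c))
    refine HasDerivAt.congr_deriv this ?_
    simp
    try ring
  have hp : ∀ y ∈ Ioi A, 0 ≤ c * (y ^ 4 - 3 * y ^ 2) * Real.exp (-y ^ 2 / 2) := by
    intro y hy
    have hy' : A < y := hy
    have h1 : 4 ≤ y ^ 2 := by nlinarith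
    have : 0 ≤ y ^ 4 - 3 * y ^ 2 := by nlinarith
    positivity
  have hl : Tendsto (fun y : ℝ => -c * (y ^ 3 * Real.exp (-y ^ 2 / 2))) atTop (nhds 0) := by
    simpa using (pow_exp_lim 3).const_mul (-c)
  refine ⟨integrableOn_Ioi_deriv_of_nonneg' hd hp hl, ?_⟩
  rw [integral_Ioi_of_hasDerivAt_of_nonneg' hd hp hl]
  ring

lemma mid (τ B : ℝ) (hτ : 0 < τ) (hB : 0 < B) :
    ∫ y in (0:ℝ)..B, τ * Real.exp (y * B / 2) ≤ τ * Real.exp (B ^ 2 / 2) * 2 / B := by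
  have hd : ∀ y ∈ uIcc 0 B, HasDerivAt (fun y : ℝ => τ * (2 / B) * Real.exp (y * B / 2))
      (τ * Real.exp (y * B / 2)) y := by
    intro y _
    have h : HasDerivAt (fun y : ℝ => y * B / 2) (B / 2) y := by
      simpa using ((hasDerivAt_id y).mul_const B).div_const 2
    refine HasDerivAt.congr_deriv (h.exp.const_mul (τ * (2 / B))) ?_
    field_simp
  rw [intervalIntegral.integral_eq_sub_of_hasDerivAt hd
    ((by fun_prop : Continuous fun y : ℝ => τ * Real.exp (y * B / 2)).intervalIntegrable _ _)]
  have : 0 ≤ τ * (2 / B) * Real.exp (0 * B / 2) := by positivity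
  rw [show B * B / 2 = B ^ 2 / 2 by ring]
  have e : τ * (2 / B) * Real.exp (B ^ 2 / 2) = τ * Real.exp (B ^ 2 / 2) * 2 / B := by ring
  linarith

lemma coord_zero (P : Prior) (ha : P.a = 1/2) (hb : IntegrableOn (bpr P) (Ioi 0)) (C τ A : ℝ)
    (hC : 1 ≤ C) (hA : 2 ≤ A) (hτ : τ = Real.exp (-A ^ 2 / 2))
    (hv : ∀ x, vv P τ x ≤ C * (τ * Real.exp (x ^ 2 / 2))) :
    ∃ G : ℝ → ℝ, Integrable G ∧ ∫ x, G x ≤ 8 * C * (τ * A) ∧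
      ∀ x, vv P τ x * gauss (x - 0) ≤ G x := by
  have hτ0 : 0 < τ := by rw [hτ]; positivity
  have ht := tail1 A hA
  have hs := even_split (fun _ => C * τ) _ A (by linarith) continuous_const ht.1
  refine ⟨_, hs.1, ?_, ?_⟩
  · rw [hs.2, ht.2, ← hτ]
    simp only [intervalIntegral.integral_const, smul_eq_mul]
    have : 0 < A * τ := by positivity
    nlinarith
  · intro x
    rw [sub_zero]
    have hg := gauss_le x
    have hg0 := gauss_pos x
    by_cases h : |x| ≤ A
    · simp only [h, if_true]
      calc vv P τ x * gauss x ≤ C * (τ * Real.exp (x ^ 2 / 2)) * gauss x := by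
            gcongr; exact hv x
        _ ≤ C * (τ * Real.exp (x ^ 2 / 2)) * Real.exp (-x ^ 2 / 2) := by gcongr
        _ = C * τ * (Real.exp (x ^ 2 / 2) * Real.exp (-x ^ 2 / 2)) := by ring
        _ = C * τ := by rw [← Real.exp_add]; ring_nf; simp
    · simp only [h, if_false, sq_abs]
      have h2 : 4 ≤ x ^ 2 := by
        rw [← sq_abs]; nlinarith [not_le.1 h]
      calc vv P τ x * gauss x ≤ (1 + x ^ 2) * gauss x := by
            gcongr; exact vv_le_sq P ha hb τ x
        _ ≤ (1 + x ^ 2) * Real.exp (-x ^ 2 / 2) := by gcongr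
        _ ≤ 3 * (x ^ 2 - 1) * Real.exp (-x ^ 2 / 2) := by
            gcongr; linarith

lemma coord_any (P : Prior) (C τ A : ℝ)
    (hC : 1 ≤ C) (hA : 2 ≤ A) (hτ : τ = Real.exp (-A ^ 2 / 2))
    (hv : ∀ x, vv P τ x ≤ C * (τ * Real.exp (x ^ 2 / 2)))
    (hv2 : ∀ x, 1 ≤ x ^ 2 → vv P τ x ≤ C * (1 + x ^ 4 * Real.exp (-x ^ 2 / 2) / τ)) (θ : ℝ) :
    ∃ G : ℝ → ℝ, Integrable G ∧ ∫ x, G x ≤ 69 * C * A ∧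
      ∀ x, vv P τ x * gauss (x - θ) ≤ G x := by
  have hτ0 : 0 < τ := by rw [hτ]; positivity
  have hA0 : 0 < A := by linarith
  have hl0 : 0 ≤ Real.log (A ^ 2) := Real.log_nonneg (by nlinarith)
  have hl1 : Real.log (A ^ 2) ≤ A ^ 2 := (Real.log_le_sub_one_of_pos (by positivity)).trans
    (by linarith)
  obtain ⟨B, hB⟩ : ∃ B, B = Real.sqrt (A ^ 2 + 2 * Real.log (A ^ 2)) := ⟨_, rfl⟩
  have hB2 : B ^ 2 = A ^ 2 + 2 * Real.log (A ^ 2) := by rw [hB, Real.sq_sqrt (by positivity)]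
  have hBA : A ≤ B := by rw [hB]; exact Real.le_sqrt_of_sq_le (by linarith)
  have hBA2 : B ≤ 2 * A := (pow_le_pow_iff_left₀ (hA0.le.trans hBA) (by positivity) two_ne_zero).1 (by nlinarith)
  have hB0 : 0 < B := by linarith
  have hE : Real.exp (B ^ 2 / 2) = A ^ 2 / τ := by
    rw [hB2, hτ, show (A ^ 2 + 2 * Real.log (A ^ 2)) / 2 = Real.log (A ^ 2) - (-A ^ 2 / 2) by ring,
      Real.exp_sub, Real.exp_log (by positivity)]
  have hE2 : Real.exp (-B ^ 2 / 2) = τ / A ^ 2 := by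
    rw [show -B ^ 2 / 2 = -(B ^ 2 / 2) by ring, Real.exp_neg, hE, inv_div]
  have ht := tail2 B (4 / τ) (by linarith) (by positivity)
  have hm := mid τ B hτ0 hB0
  have hs := even_split (fun y => τ * Real.exp (y * B / 2)) _ B hB0 (by fun_prop) ht.1
  have hi := ((gauss_int θ).const_mul C)
  have hi2 := hs.1.const_mul C
  refine ⟨_, hi.add hi2, ?_, ?_⟩
  · have e : ∀ f g : ℝ → ℝ, Integrable f → Integrable g →
      ∫ x, (f + g) x = (∫ x, f x) + ∫ x, g x := fun f g hf hg => integral_add hf hg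
    rw [e _ _ hi hi2, integral_const_mul, integral_const_mul, gauss_integral, hs.2, ht.2, hE2]
    rw [hE] at hm
    have h1 : τ * (A ^ 2 / τ) * 2 / B ≤ 2 * A := by
      rw [div_le_iff₀ hB0]
      have : τ * (A ^ 2 / τ) = A ^ 2 := by field_simp
      rw [this]; nlinarith
    have h2 : 4 / τ * B ^ 3 * (τ / A ^ 2) ≤ 32 * A := by
      have : 4 / τ * B ^ 3 * (τ / A ^ 2) = 4 * B ^ 3 / A ^ 2 := by field_simp
      rw [this, div_le_iff₀ (by positivity)]
      have : B ^ 3 ≤ (2 * A) ^ 3 := by gcongr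
      nlinarith
    have h3 := hm.trans h1
    have h4 : 1 + 2 * ((∫ y in (0:ℝ)..B, τ * Real.exp (y * B / 2)) +
        4 / τ * B ^ 3 * (τ / A ^ 2)) ≤ 69 * A := by linarith
    have := mul_le_mul_of_nonneg_left h4 (by linarith : (0:ℝ) ≤ C)
    linarith
  · intro x
    have hg := gauss_le_one (x - θ)
    have hg0 := gauss_pos (x - θ)
    simp only [Pi.add_apply]
    by_cases h : |x| ≤ B
    · simp only [h, if_true]
      have hx : Real.exp (x ^ 2 / 2) ≤ Real.exp (|x| * B / 2) := by
        apply Real.exp_le_exp.2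
        rw [← sq_abs]; nlinarith [abs_nonneg x]
      calc vv P τ x * gauss (x - θ) ≤ C * (τ * Real.exp (|x| * B / 2)) * gauss (x - θ) := by
            gcongr; exact (hv x).trans (by gcongr)
        _ ≤ C * (τ * Real.exp (|x| * B / 2)) * 1 := by gcongr
        _ ≤ _ := by
            have : 0 ≤ C * gauss (x - θ) := by positivity
            linarith
    · simp only [h, if_false]
      have h2 : 4 ≤ x ^ 2 := by
        rw [← sq_abs]; nlinarith [not_le.1 h]
      have h4 : |x| ^ 4 = x ^ 4 := by rw [show 4 = 2 * 2 by rfl, pow_mul, sq_abs, pow_mul]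
      rw [h4, sq_abs]
      have hx4 : x ^ 4 * Real.exp (-x ^ 2 / 2) / τ ≤
          4 / τ * (x ^ 4 - 3 * x ^ 2) * Real.exp (-x ^ 2 / 2) := by
        have e : 4 / τ * (x ^ 4 - 3 * x ^ 2) * Real.exp (-x ^ 2 / 2) =
          (4 * (x ^ 4 - 3 * x ^ 2)) * Real.exp (-x ^ 2 / 2) / τ := by ring
        rw [e]
        gcongr
        nlinarith
      have h0 : 0 ≤ x ^ 4 * Real.exp (-x ^ 2 / 2) / τ := by positivity
      calc vv P τ x * gauss (x - θ) ≤ C * (1 + x ^ 4 * Real.exp (-x ^ 2 / 2) / τ) * gauss (x - θ) := by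
            gcongr; exact hv2 x (by linarith)
        _ = C * gauss (x - θ) + C * (x ^ 4 * Real.exp (-x ^ 2 / 2) / τ) * gauss (x - θ) := by ring
        _ ≤ C * gauss (x - θ) + C * (x ^ 4 * Real.exp (-x ^ 2 / 2) / τ) * 1 := by gcongr
        _ ≤ C * gauss (x - θ) + C * (4 / τ * (x ^ 4 - 3 * x ^ 2) * Real.exp (-x ^ 2 / 2)) := by
            rw [mul_one]; gcongr

lemma EN_le (P : Prior) (ha : P.a = 1/2) (hb : IntegrableOn (bpr P) (Ioi 0)) (τ : ℝ) (hτ : 0 < τ)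
    {n : ℕ} (θ₀ : Fin n → ℝ) (r : ℝ) (hr : 0 < r) (G : Fin n → ℝ → ℝ) (b : Fin n → ℝ)
    (hG : ∀ i, Integrable (G i)) (hGb : ∀ i, ∫ x, G i x ≤ b i)
    (hv : ∀ i x, vv P τ x * gauss (x - θ₀ i) ≤ G i x) :
    EN n θ₀ (fun x => postProb P τ x {θ | r < ∑ i, (θ i - T P τ (x i)) ^ 2}) ≤ (∑ i, b i) / r := by
  have hc : ∀ i, (fun t => G i t / gauss (t - θ₀ i) * gauss (t - θ₀ i)) = G i := by
    intro i; funext t; exact div_mul_cancel₀ _ (gauss_pos _).ne'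
  have hs := sum_prod (fun i t => gauss (t - θ₀ i)) (fun i t => G i t / gauss (t - θ₀ i))
    (fun i => gauss_int _) (fun i => by rw [hc]; exact hG i)
    (fun i => by rw [gauss_integral]; exact one_ne_zero)
  have hle : EN n θ₀ (fun x => postProb P τ x {θ | r < ∑ i, (θ i - T P τ (x i)) ^ 2}) ≤
      ∫ x : Fin n → ℝ, ((∑ i, G i (x i) / gauss (x i - θ₀ i)) * ∏ j, gauss (x j - θ₀ j)) / r := by
    unfold EN
    refine integral_mono_of_nonneg ?_ (hs.1.div_const r) ?_
    · refine Eventually.of_forall fun x => ?_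
      exact mul_nonneg (postProb_nonneg P τ x _) (Finset.prod_nonneg fun i _ => (gauss_pos _).le)
    · refine Eventually.of_forall fun x => ?_
      simp only
      rw [mul_div_right_comm]
      refine mul_le_mul_of_nonneg_right ?_ (Finset.prod_nonneg fun i _ => (gauss_pos _).le)
      refine (markov P ha hb τ hτ x r hr).trans ?_
      apply div_le_div_of_nonneg_right _ hr.le
      refine Finset.sum_le_sum fun i _ => ?_
      rw [le_div_iff₀ (gauss_pos _)]
      exact hv i (x i)
  refine hle.trans ?_
  rw [integral_div, hs.2]
  simp only [gauss_integral, Finset.prod_const_one, mul_one, div_one]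
  apply div_le_div_of_nonneg_right _ hr.le
  refine Finset.sum_le_sum fun i _ => ?_
  have : ∫ t, G i t / gauss (t - θ₀ i) * gauss (t - θ₀ i) = ∫ t, G i t := by rw [hc]
  rw [this]; exact hGb i

end OneGroup

/-- equation (3.8): for `a = 1/2` and `τ_n = p_n/n`, the posterior
contracts around the Bayes estimate at the (suboptimally fast) rate
`p_n √(log(n/p_n))`. -/
theorem posterior_contraction_suboptimal_radius (P : Prior) (ha : P.a = 1/2)
    (p : ℕ → ℕ)
    (hp : Tendsto p atTop atTop)
    (hpo : (fun n => (p n : ℝ)) =o[atTop] (fun n => (n : ℝ)))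
    (Mseq : ℕ → ℝ) (hM : Tendsto Mseq atTop atTop) :
    ∀ ε > (0:ℝ), ∃ N : ℕ, ∀ n ≥ N, ∀ θ₀ ∈ nearlyBlack n (p n),
      EN n θ₀ (fun x => postProb P ((p n : ℝ) / (n : ℝ)) x
        {θ : Fin n → ℝ |
          Mseq n * (p n : ℝ) * Real.sqrt (Real.log ((n : ℝ) / (p n : ℝ))) <
            ∑ i, (θ i - T P ((p n : ℝ) / (n : ℝ)) (x i)) ^ 2}) < ε := by
  intro ε hε
  have hpn : ∀ δ > (0:ℝ), ∀ᶠ n in atTop, 0 < p n ∧ 0 < n ∧ (p n : ℝ) / (n : ℝ) ≤ δ := by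
    intro δ hδ
    filter_upwards [hp.eventually_gt_atTop 0, eventually_gt_atTop 0, hpo.def hδ] with n h1 h2 h3
    refine ⟨h1, h2, ?_⟩
    have : (0:ℝ) < n := by exact_mod_cast h2
    rw [div_le_iff₀ this]
    simpa using h3
  by_cases hb : IntegrableOn (bpr P) (Ioi 0)
  · obtain ⟨C, hC, hV⟩ := vv_bounds P ha hb
    have ht0 := P.t₀_pos
    have hδ : 0 < min (Real.exp (-2)) (1 / (P.t₀ + 1)) := by positivity
    obtain ⟨N, hN⟩ := eventually_atTop.1 ((hpn _ hδ).and
      (hM.eventually_gt_atTop (154 * C / ε)))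
    refine ⟨N, fun n hn θ₀ hθ => ?_⟩
    obtain ⟨⟨hp0, hn0, hτδ⟩, hMn⟩ := hN n hn
    have hp0' : (0:ℝ) < p n := by exact_mod_cast hp0
    have hn0' : (0:ℝ) < n := by exact_mod_cast hn0
    obtain ⟨τ, hτ⟩ : ∃ τ, τ = (p n : ℝ) / (n : ℝ) := ⟨_, rfl⟩
    rw [← hτ] at hτδ ⊢
    have hτ0 : 0 < τ := by rw [hτ]; positivity
    have hτ2 : τ ≤ Real.exp (-2) := hτδ.trans (min_le_left _ _)
    have hτ1 : τ ≤ 1 := hτ2.trans (Real.exp_le_one_iff.2 (by norm_num))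
    have hτt : P.t₀ * τ ^ 2 ≤ 1 := by
      have h := hτδ.trans (min_le_right _ _)
      rw [le_div_iff₀ (by positivity)] at h
      nlinarith [mul_nonneg ht0.le (mul_nonneg hτ0.le (sub_nonneg.2 hτ1))]
    have hlog : Real.log ((n : ℝ) / (p n : ℝ)) = - Real.log τ := by
      rw [hτ, ← Real.log_inv, inv_div]
    have hl2 : Real.log τ ≤ -2 := by
      rw [Real.log_le_iff_le_exp hτ0]; exact hτ2
    rw [hlog]
    obtain ⟨l, hl⟩ : ∃ l, l = - Real.log τ := ⟨_, rfl⟩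
    rw [← hl]
    have hl2' : 2 ≤ l := by linarith
    obtain ⟨A, hAd⟩ : ∃ A, A = Real.sqrt (2 * l) := ⟨_, rfl⟩
    have hA2 : A ^ 2 = 2 * l := by rw [hAd, Real.sq_sqrt (by positivity)]
    have hA : 2 ≤ A := by
      rw [hAd]; exact Real.le_sqrt_of_sq_le (by linarith)
    have hAτ : τ = Real.exp (-A ^ 2 / 2) := by
      rw [hA2, hl]
      rw [show -(2 * -Real.log τ) / 2 = Real.log τ by ring, Real.exp_log hτ0]
    have hAS : A ≤ 2 * Real.sqrt l := by
      rw [hAd, Real.sqrt_le_left (by positivity), mul_pow, Real.sq_sqrt (by linarith)]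
      linarith
    have hS : 0 < Real.sqrt l := Real.sqrt_pos.2 (by linarith)
    have hM0 : 0 < Mseq n := lt_of_le_of_lt (by positivity) hMn
    have hr : 0 < Mseq n * (p n : ℝ) * Real.sqrt l := by positivity
    have hV' := hV τ hτ0 hτ1 hτt
    have hex : ∀ i, ∃ G : ℝ → ℝ, Integrable G ∧
        ∫ x, G x ≤ 8 * C * (τ * A) + (if θ₀ i ≠ 0 then 69 * C * A else 0) ∧
        ∀ x, vv P τ x * gauss (x - θ₀ i) ≤ G x := by
      intro i
      by_cases h : θ₀ i = 0
      · obtain ⟨G, h1, h2, h3⟩ := coord_zero P ha hb C τ A hC hA hAτ (fun x => (hV' x).1)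
        exact ⟨G, h1, by simpa [h] using h2, by rw [h]; exact h3⟩
      · obtain ⟨G, h1, h2, h3⟩ := coord_any P C τ A hC hA hAτ (fun x => (hV' x).1)
          (fun x => (hV' x).2) (θ₀ i)
        refine ⟨G, h1, ?_, h3⟩
        have : 0 ≤ 8 * C * (τ * A) := by positivity
        simp only [ne_eq, h, not_false_eq_true, if_true]
        linarith
    choose G hG1 hG2 hG3 using hex
    refine (EN_le P ha hb τ hτ0 θ₀ _ hr G _ hG1 hG2 hG3).trans_lt ?_
    rw [div_lt_iff₀ hr, Finset.sum_add_distrib, ← Finset.sum_filter]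
    simp only [Finset.sum_const, Finset.card_univ, Fintype.card_fin, nsmul_eq_mul]
    have hcard : ((Finset.univ.filter fun i => θ₀ i ≠ 0).card : ℝ) ≤ p n := by
      exact_mod_cast hθ
    have h1 : ((Finset.univ.filter fun i => θ₀ i ≠ 0).card : ℝ) * (69 * C * A) ≤
        p n * (69 * C * A) := by gcongr
    have h2 : (n : ℝ) * (8 * C * (τ * A)) = p n * (8 * C * A) := by
      rw [hτ]; field_simp
    rw [h2]
    have h3 : 154 * C < ε * Mseq n := by
      rw [div_lt_iff₀ hε] at hMn; linarith
    have h4 : p n * (77 * C * A) ≤ p n * (77 * C * (2 * Real.sqrt l)) := by gcongr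
    have h5 := mul_lt_mul_of_pos_right h3 (mul_pos hp0' hS)
    nlinarith
  · obtain ⟨N, hN⟩ := eventually_atTop.1 (hpn 1 one_pos)
    refine ⟨N, fun n hn θ₀ hθ => ?_⟩
    obtain ⟨hp0, hn0, -⟩ := hN n hn
    have hτ0 : 0 < (p n : ℝ) / (n : ℝ) := by positivity
    unfold EN
    simp only [postProb_zero P ha _ hτ0 hn0 hb, zero_mul, integral_zero]
    exact hε
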